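/- Let k be a finite field, V a finite-dimensional k-vector space, and K/k a field extension. Every automorphism φ of the K-scheme Ω(V)_K := Ω(V) ×_{Spec k} Spec K over K comes by base change from a k-automorphism of P(V): there exists an automorphism ψ of P(V) over k such that (ψ ×_{Spec k} id_{Spec K}) ∘ ι_K = ι_K ∘ φ, where ι_K : Ω(V)_K → P(V) ×_{Spec k} Spec K is the base change of the open immersion ι : Ω(V) → P(V). -/

import Mathlib

open AlgebraicGeometry CategoryTheory MvPolynomial Module

attribute [local instance] MvPolynomial.gradedAlgebra

/-- The projective space `P(V)` over `k` for an `m`-dimensional vector space `V`: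
the Proj of the polynomial ring in `m` variables over `k` with its standard
grading (equivalently, of `Sym V`). -/
noncomputable abbrev projSpace (k : Type*) [Field k] (m : ℕ) : Scheme :=
  Proj (homogeneousSubmodule (Fin m) k)

/-- The set of points of `P(V)` lying on no `k`-rational hyperplane, i.e. in the
complement of the zero locus of every nonzero linear form. -/
def drinfeldSet (k : Type*) [Field k] (m : ℕ) : Set (projSpace k m) :=
  {x | ∀ c : Fin m → k, c ≠ 0 →
    (∑ i, MvPolynomial.C (c i) * MvPolynomial.X i) ∉ x.asHomogeneousIdeal}

lemma isOpen_drinfeldSet (k : Type*) [Field k] [Fintype k] (m : ℕ) :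
    IsOpen (drinfeldSet k m) := by
  have : drinfeldSet k m = ⋂ c : {c : Fin m → k // c ≠ 0},
      (Proj.basicOpen (homogeneousSubmodule (Fin m) k)
        (∑ i, MvPolynomial.C (c.1 i) * MvPolynomial.X i) : Set (projSpace k m)) := by
    ext x
    simp only [drinfeldSet, Set.mem_setOf_eq, Set.mem_iInter, Subtype.forall]
    rfl
  rw [this]
  exact isOpen_iInter_of_finite fun c =>
    (Proj.basicOpen (homogeneousSubmodule (Fin m) k) _).isOpen

/-- The Drinfeld half-space `Ω(V)` as an open subset of `P(V)`. -/
def drinfeldOpens (k : Type*) [Field k] [Fintype k] (m : ℕ) : (projSpace k m).Opens :=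
  ⟨drinfeldSet k m, isOpen_drinfeldSet k m⟩

/-- The Drinfeld half-space `Ω(V)` as a scheme. -/
noncomputable abbrev drinfeldScheme (k : Type*) [Field k] [Fintype k] (m : ℕ) : Scheme :=
  (drinfeldOpens k m).toScheme

/-- The open immersion `ι : Ω(V) → P(V)`. -/
noncomputable def drinfeldι (k : Type*) [Field k] [Fintype k] (m : ℕ) :
    drinfeldScheme k m ⟶ projSpace k m :=
  (drinfeldOpens k m).ι

/-- The structure morphism `P(V) ⟶ Spec k`. -/
noncomputable def projStruct (k : Type*) [Field k] (m : ℕ) :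
    projSpace k m ⟶ Spec (CommRingCat.of k) :=
  Proj.toSpecZero (homogeneousSubmodule (Fin m) k) ≫
    Spec.map (CommRingCat.ofHom
      ((GradedRing.projZeroRingHom' (homogeneousSubmodule (Fin m) k)).comp
        (algebraMap k (MvPolynomial (Fin m) k))))

/-- The structure morphism `Ω(V) ⟶ Spec k`. -/
noncomputable def drinfeldStruct (k : Type*) [Field k] [Fintype k] (m : ℕ) :
    drinfeldScheme k m ⟶ Spec (CommRingCat.of k) :=
  drinfeldι k m ≫ projStruct k m

open CategoryTheory.Limits

universe u

/-!
Functions on the half-space are fractions of degree zero whose denominators are products of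
`k`-rational linear forms. By unique factorization, an automorphism of the half-space over `K`
therefore lifts, up to a common factor, to a substitution under which every rational linear form
becomes a constant times a product of powers of rational linear forms.

Up to additive constants, the matrix of exponents acts on functions on the points of the projective
space of lines in `V`. Restricting valuations of the polynomial ring to `V` yields the functions
whose superlevel sets are subspaces, so the matrix preserves this class and, applying the argument
to the inverse automorphism, permutes it modulo constants. Indicator functions of points
characterize themselves by indecomposability in this class; hence the matrix permutes them modulo
constants, and up to a common factor the substitution sends each rational linear form to a multiple
of a rational linear form. Additivity forces the resulting map to be a linear automorphism of `V`,
which induces the given automorphism.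
-/

namespace Drinfeld

open Projectivization
open scoped LinearAlgebra.Projectivization

section Ultrametric

variable {k V : Type*} [Field k] [AddCommGroup V] [Module k V]

/-- Functions on the points of a projective space whose superlevel sets are projective subspaces:
`-log` of a norm on `V`, for the trivial absolute value on `k`. -/
def IsUltrametric (F : ℙ k V → ℤ) : Prop :=
  ∀ (v w : V) (hv : v ≠ 0) (hw : w ≠ 0) (hvw : v + w ≠ 0),
    min (F (mk k v hv)) (F (mk k w hw)) ≤ F (mk k (v + w) hvw)

open Classical in
/-- The indicator function of the projective subspace attached to `W`. -/
noncomputable def ind (W : Submodule k V) (p : ℙ k V) : ℤ :=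
  if p.submodule ≤ W then 1 else 0

/-- The constant functions; functions on points only matter modulo these, because the forms
they arise from are only defined up to a common factor. -/
abbrev constants (X : Type*) : Submodule ℤ (X → ℤ) := Submodule.span ℤ {1}

lemma smodEq_constants {X : Type*} {F G : X → ℤ} :
    F ≡ G [SMOD constants X] ↔ ∃ c, ∀ p, F p = c + G p := by
  simp only [SModEq.sub_mem, Submodule.mem_span_singleton, funext_iff, Pi.smul_apply,
    Pi.one_apply, smul_eq_mul, mul_one, Pi.sub_apply]
  exact exists_congr fun c ↦ forall_congr' fun p ↦ by rw [eq_sub_iff_add_eq, eq_comm]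

lemma single_smodEq_single {X : Type*} [DecidableEq X] {p q : X}
    (h : Pi.single p 1 ≡ Pi.single q 1 [SMOD constants X]) : p = q := by
  obtain ⟨c, hc⟩ := smodEq_constants.1 h
  by_contra hpq
  have hp := hc p
  have hq := hc q
  simp only [Pi.single_eq_same, Pi.single_eq_of_ne hpq, Pi.single_eq_of_ne (Ne.symm hpq)] at hp hq
  omega

lemma smodEq_of_subsingleton {X : Type*} [Subsingleton X] (F G : X → ℤ) :
    F ≡ G [SMOD constants X] := by
  cases isEmpty_or_nonempty X with
  | inl _ => rw [Subsingleton.elim F G]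
  | inr h =>
    obtain ⟨x⟩ := h
    exact smodEq_constants.2 ⟨F x - G x, fun p ↦ by rw [Subsingleton.elim p x]; ring⟩

lemma ind_mk (W : Submodule k V) {v : V} (hv : v ≠ 0) [Decidable (v ∈ W)] :
    ind W (mk k v hv) = if v ∈ W then 1 else 0 := by
  simp only [ind, submodule_mk, Submodule.span_singleton_le_iff_mem]

lemma ind_nonneg (W : Submodule k V) (p : ℙ k V) : 0 ≤ ind W p := by
  unfold ind; split_ifs <;> simp

lemma ind_le_one (W : Submodule k V) (p : ℙ k V) : ind W p ≤ 1 := by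
  unfold ind; split_ifs <;> simp

lemma ind_eq_one {W : Submodule k V} {p : ℙ k V} (h : p.submodule ≤ W) : ind W p = 1 := if_pos h

lemma ind_eq_zero {W : Submodule k V} {p : ℙ k V} (h : ¬ p.submodule ≤ W) : ind W p = 0 :=
  if_neg h

lemma ind_bot : ind (⊥ : Submodule k V) = 0 := by
  funext p
  induction p using Projectivization.ind with
  | h v hv => classical rw [ind_mk, if_neg (by simpa using hv), Pi.zero_apply]

lemma submodule_le_submodule_iff {p q : ℙ k V} : p.submodule ≤ q.submodule ↔ p = q := by
  refine ⟨fun h ↦ submodule_injective (Submodule.eq_of_le_of_finrank_eq h ?_), fun h ↦ h ▸ le_rfl⟩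
  rw [finrank_submodule, finrank_submodule]

lemma exists_submodule_le {W : Submodule k V} (hW : W ≠ ⊥) : ∃ p : ℙ k V, p.submodule ≤ W := by
  obtain ⟨v, hvW, hv⟩ := (Submodule.ne_bot_iff W).1 hW
  exact ⟨mk k v hv, by rwa [submodule_mk, Submodule.span_singleton_le_iff_mem]⟩

lemma ind_submodule [DecidableEq (ℙ k V)] (p : ℙ k V) : ind p.submodule = Pi.single p 1 := by
  funext q
  simp only [ind, submodule_le_submodule_iff, Pi.single_apply]

lemma sum_ind_submodule [Fintype (ℙ k V)] (W : Submodule k V)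
    [DecidablePred fun p : ℙ k V ↦ p.submodule ≤ W] :
    ∑ p : ℙ k V with p.submodule ≤ W, ind p.submodule = ind W := by
  classical
  funext q
  simp [ind_submodule, Finset.sum_apply, Pi.single_apply, ind]

lemma IsUltrametric.of_smodEq {F G : ℙ k V → ℤ} (hF : IsUltrametric F)
    (h : F ≡ G [SMOD constants _]) : IsUltrametric G := by
  obtain ⟨c, hc⟩ := smodEq_constants.1 h
  intro v w hv hw hvw
  have := hF v w hv hw hvw
  simp only [hc] at this
  omega

lemma isUltrametric_ind (W : Submodule k V) : IsUltrametric (ind W) := by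
  classical
  intro v w hv hw hvw
  have (hv : v ∈ W) (hw : w ∈ W) := W.add_mem hv hw
  simp only [ind_mk]
  split_ifs <;> simp_all

lemma isUltrametric_ind_add_ind {W W' : Submodule k V} (h : W ≤ W') :
    IsUltrametric (ind W + ind W') := by
  classical
  intro v w hv hw hvw
  have hadd (hv : v ∈ W) (hw : w ∈ W) := W.add_mem hv hw
  have hadd' (hv : v ∈ W') (hw : w ∈ W') := W'.add_mem hv hw
  have hv' := @h v
  have hw' := @h w
  have hvw' := @h (v + w)
  simp only [Pi.add_apply, ind_mk]
  split_ifs <;> simp_all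

lemma le_or_le_of_isUltrametric_ind_add_ind {W : Submodule k V} {W' : Submodule k V}
    (h : IsUltrametric (ind W + ind W')) : W ≤ W' ∨ W' ≤ W := by
  classical
  by_contra! hne
  obtain ⟨⟨v, hv, hv'⟩, w, hw', hw⟩ :=
    And.intro (SetLike.not_le_iff_exists.1 hne.1) (SetLike.not_le_iff_exists.1 hne.2)
  have hvw : v + w ∉ W := fun h ↦ hw ((W.add_mem_iff_right hv).1 h)
  have hvw' : v + w ∉ W' := fun h ↦ hv' ((W'.add_mem_iff_left hw').1 h)
  have := h v w (ne_of_mem_of_not_mem W'.zero_mem hv').symm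
    (ne_of_mem_of_not_mem W.zero_mem hw).symm (ne_of_mem_of_not_mem W.zero_mem hvw).symm
  simp only [Pi.add_apply, ind_mk, hv, hv', hw, hw', hvw, hvw', if_true, if_false] at this
  omega

lemma exists_not_submodule_le {W W' : Submodule k V} (hW : W ≠ ⊤) (hW' : W' ≠ ⊤) :
    ∃ p : ℙ k V, ¬ p.submodule ≤ W ∧ ¬ p.submodule ≤ W' := by
  obtain ⟨v, -, hv⟩ : ∃ v ∈ (⊤ : Submodule k V), v ∉ (W ∪ W' : Set V) := by
    refine Set.not_subset.1 fun h ↦ ?_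
    rw [AddSubgroupClass.subset_union, top_le_iff, top_le_iff] at h
    exact h.elim hW hW'
  rw [Set.mem_union, not_or, SetLike.mem_coe, SetLike.mem_coe] at hv
  refine ⟨mk k v (ne_of_mem_of_not_mem W.zero_mem hv.1).symm, ?_⟩
  simpa only [submodule_mk, Submodule.span_singleton_le_iff_mem] using hv

/-- The subspace whose points are those where the ultrametric function `F` exceeds `n`. -/
def IsUltrametric.superlevel {F : ℙ k V → ℤ} (hF : IsUltrametric F) (n : ℤ) :
    Submodule k V where
  carrier := {v | ∀ hv : v ≠ 0, n < F (mk k v hv)}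
  zero_mem' := fun h ↦ absurd rfl h
  add_mem' {v w} hv hw hvw := by
    by_cases hv0 : v = 0
    · subst hv0; simpa only [zero_add] using hw (by simpa using hvw)
    by_cases hw0 : w = 0
    · subst hw0; simpa only [add_zero] using hv hv0
    exact (lt_min (hv hv0) (hw hw0)).trans_le (hF v w hv0 hw0 hvw)
  smul_mem' c v hv hcv := by
    have hv0 : v ≠ 0 := right_ne_zero_of_smul hcv
    have : mk k (c • v) hcv = mk k v hv0 := (mk_eq_mk_iff' k _ _ _ _).2 ⟨c, rfl⟩
    exact this ▸ hv hv0

lemma IsUltrametric.submodule_le_superlevel {F : ℙ k V → ℤ} (hF : IsUltrametric F) {n : ℤ}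
    {p : ℙ k V} : p.submodule ≤ hF.superlevel n ↔ n < F p := by
  induction p using Projectivization.ind with
  | h v hv =>
    rw [submodule_mk, Submodule.span_singleton_le_iff_mem]
    exact ⟨fun h ↦ h hv, fun h _ ↦ h⟩

/-- `F` lowered by one wherever it is positive: the rest of `F` after removing the indicator of its
support. -/
def pred {X : Type*} (F : X → ℤ) (p : X) : ℤ := max 0 (F p - 1)

lemma IsUltrametric.pred {F : ℙ k V → ℤ} (hF : IsUltrametric F) : IsUltrametric (pred F) := by
  intro v w hv hw hvw
  have := hF v w hv hw hvw
  simp only [Drinfeld.pred]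
  omega

lemma IsUltrametric.eq_ind_add_pred {F : ℙ k V → ℤ} (hF : IsUltrametric F) (h0 : 0 ≤ F) :
    F = ind (hF.superlevel 0) + Drinfeld.pred F := by
  funext p
  have : 0 ≤ F p := h0 p
  simp only [Pi.add_apply, ind, hF.submodule_le_superlevel, Drinfeld.pred]
  split_ifs <;> omega

/-- Ultrametric functions matter modulo constants, so their minimum may be taken to be `0`. -/
lemma exists_smodEq_nonneg {X : Type*} [Finite X] [Nonempty X] (F : X → ℤ) :
    ∃ G, F ≡ G [SMOD constants X] ∧ 0 ≤ G ∧ ∃ p, G p = 0 := by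
  obtain ⟨p, hp⟩ := Finite.exists_min F
  exact ⟨fun q ↦ F q - F p, smodEq_constants.2 ⟨F p, fun q ↦ by ring⟩,
    fun q ↦ sub_nonneg.2 (hp q), p, sub_self _⟩

/-- The indicator of a point is indecomposable. Two proper subspaces have a common point `u` in
their complements; relative to its value at `u`, a sum of nonconstant functions would be too large
at `z`. -/
lemma eq_zero_or_eq_zero_of_add_smodEq {F G : ℙ k V → ℤ} (hF : IsUltrametric F)
    (hG : IsUltrametric G) (hF0 : 0 ≤ F) (hG0 : 0 ≤ G) {p q : ℙ k V} (hp : F p = 0) (hq : G q = 0)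
    {z : ℙ k V} (h : F + G ≡ ind z.submodule [SMOD constants _]) : F = 0 ∨ G = 0 := by
  obtain ⟨u, huF, huG⟩ := exists_not_submodule_le
    (W := hF.superlevel 0) (W' := hG.superlevel 0)
    (fun h ↦ (hF.submodule_le_superlevel.1 (h ▸ le_top)).ne' hp)
    (fun h ↦ (hG.submodule_le_superlevel.1 (h ▸ le_top)).ne' hq)
  rw [hF.submodule_le_superlevel, not_lt] at huF
  rw [hG.submodule_le_superlevel, not_lt] at huG
  obtain ⟨c, hc⟩ := smodEq_constants.1 h
  simp only [Pi.le_def, Pi.zero_apply, Pi.add_apply] at hF0 hG0 hc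
  have hFu := hF0 u
  have hGu := hG0 u
  have hu := hc u
  have hu0 := ind_nonneg z.submodule u
  have eq_z {r : ℙ k V} (hr : F r ≠ 0 ∨ G r ≠ 0) : r = z := by
    by_contra hrz
    have hFr := hF0 r
    have hGr := hG0 r
    have hcr := hc r
    rw [ind_eq_zero (mt submodule_le_submodule_iff.1 hrz)] at hcr
    omega
  by_contra! hne
  obtain ⟨⟨r, hr⟩, s, hs⟩ := And.intro (Function.ne_iff.1 hne.1) (Function.ne_iff.1 hne.2)
  obtain rfl := eq_z (.inl hr)
  obtain rfl := eq_z (.inr hs)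
  have hFs := hF0 s
  have hGs := hG0 s
  have hcs := hc s
  rw [ind_eq_one le_rfl] at hcs
  simp only [Pi.zero_apply] at hr hs
  omega

lemma smodEq_zero_or_smodEq_zero_of_add_smodEq [Finite (ℙ k V)] {F G : ℙ k V → ℤ}
    (hF : IsUltrametric F) (hG : IsUltrametric G) {z : ℙ k V}
    (h : F + G ≡ ind z.submodule [SMOD constants _]) :
    F ≡ 0 [SMOD constants _] ∨ G ≡ 0 [SMOD constants _] := by
  have : Nonempty (ℙ k V) := ⟨z⟩
  obtain ⟨F', hFF', hF0, p, hp⟩ := exists_smodEq_nonneg F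
  obtain ⟨G', hGG', hG0, q, hq⟩ := exists_smodEq_nonneg G
  rcases eq_zero_or_eq_zero_of_add_smodEq (hF.of_smodEq hFF') (hG.of_smodEq hGG') hF0 hG0 hp hq
    ((hFF'.add hGG').symm.trans h) with rfl | rfl
  exacts [.inl hFF', .inr hGG']

lemma map_smodEq_map {Φ : (ℙ k V → ℤ) →ₗ[ℤ] (ℙ k V → ℤ)} (h1 : Φ 1 ∈ constants (ℙ k V))
    {F G : ℙ k V → ℤ} (h : F ≡ G [SMOD constants _]) : Φ F ≡ Φ G [SMOD constants _] :=
  (h.map Φ).mono <| Submodule.map_span_le _ _ _ |>.2 fun _ hF ↦ hF ▸ h1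

/-- A linear operator on functions on points which respects ultrametricity and constants. -/
structure PreservesUltrametric (Φ : (ℙ k V → ℤ) →ₗ[ℤ] (ℙ k V → ℤ)) : Prop where
  map_one_mem : Φ 1 ∈ constants (ℙ k V)
  isUltrametric {F : ℙ k V → ℤ} (hF : IsUltrametric F) : IsUltrametric (Φ F)

namespace PreservesUltrametric

variable {Φ : (ℙ k V → ℤ) →ₗ[ℤ] (ℙ k V → ℤ)} (hΦ : PreservesUltrametric Φ)
include hΦ

lemma smodEq_zero {F : ℙ k V → ℤ} (h : F ≡ 0 [SMOD constants _]) : Φ F ≡ 0 [SMOD constants _] :=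
  map_zero Φ ▸ map_smodEq_map hΦ.map_one_mem h

end PreservesUltrametric

/-- Two operators respecting ultrametricity which are mutually inverse modulo constants. -/
structure InverseModConstants (Φ Ψ : (ℙ k V → ℤ) →ₗ[ℤ] (ℙ k V → ℤ)) : Prop where
  left : PreservesUltrametric Φ
  right : PreservesUltrametric Ψ
  left_inv {F : ℙ k V → ℤ} (hF : IsUltrametric F) : Ψ (Φ F) ≡ F [SMOD constants _]
  right_inv {F : ℙ k V → ℤ} (hF : IsUltrametric F) : Φ (Ψ F) ≡ F [SMOD constants _]

namespace InverseModConstants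

variable {Φ Ψ : (ℙ k V → ℤ) →ₗ[ℤ] (ℙ k V → ℤ)} (h : InverseModConstants Φ Ψ)
include h

lemma symm : InverseModConstants Ψ Φ := ⟨h.right, h.left, h.right_inv, h.left_inv⟩

lemma smodEq_symm {F G : ℙ k V → ℤ} (hF : IsUltrametric F) (hFG : Φ F ≡ G [SMOD constants _]) :
    Ψ G ≡ F [SMOD constants _] :=
  (map_smodEq_map h.right.map_one_mem hFG.symm).trans (h.left_inv hF)

lemma exists_smodEq_ind [Finite (ℙ k V)] (z : ℙ k V) :
    ∃ W, W ≠ ⊤ ∧ Φ (ind z.submodule) ≡ ind W [SMOD constants _] := by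
  have : Nonempty (ℙ k V) := ⟨z⟩
  obtain ⟨F, hF, hF0, p, hp⟩ := exists_smodEq_nonneg (Φ (ind z.submodule))
  have hFu : IsUltrametric F := (h.left.isUltrametric (isUltrametric_ind _)).of_smodEq hF
  set S := hFu.superlevel 0
  have hFS : F = ind S + pred F := hFu.eq_ind_add_pred hF0
  have hpS : ¬ p.submodule ≤ S := fun h ↦ (hFu.submodule_le_superlevel.1 h).ne' hp
  have hS : S ≠ ⊤ := fun h ↦ hpS (h ▸ le_top)
  have hsum : Ψ (ind S) + Ψ (pred F) ≡ ind z.submodule [SMOD constants _] := by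
    rw [← map_add, ← hFS]
    exact h.smodEq_symm (isUltrametric_ind _) hF
  rcases smodEq_zero_or_smodEq_zero_of_add_smodEq (h.right.isUltrametric (isUltrametric_ind S))
    (h.right.isUltrametric hFu.pred) hsum with hS0 | hpred0
  · obtain ⟨c, hc⟩ := smodEq_constants.1
      ((h.right_inv (isUltrametric_ind S)).symm.trans (h.left.smodEq_zero hS0))
    have hc0 : c = 0 := by simpa [ind_eq_zero hpS] using (hc p).symm
    have hFind : F = ind (⊥ : Submodule k V) := by
      rw [ind_bot]
      funext q
      have hq := congrFun hFS q
      have hSq := hc q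
      simp only [Pi.add_apply, pred, Pi.zero_apply] at hq hSq ⊢
      omega
    exact ⟨⊥, ne_top_of_le_ne_top hS bot_le, hFind ▸ hF⟩
  · have hpred := (h.right_inv hFu.pred).symm.trans (h.left.smodEq_zero hpred0)
    have hSF := (SModEq.refl (ind S)).add hpred
    rw [← hFS, add_zero] at hSF
    exact ⟨S, hS, hF.trans hSF⟩

lemma ne_bot_of_smodEq_ind [Nontrivial (ℙ k V)] {z : ℙ k V} {W : Submodule k V}
    (hW : Φ (ind z.submodule) ≡ ind W [SMOD constants _]) : W ≠ ⊥ := by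
  rintro rfl
  have hz := h.smodEq_symm (isUltrametric_ind _) hW
  obtain ⟨c, hc⟩ := smodEq_constants.1 (ind_bot (k := k) (V := V) ▸ hz)
  obtain ⟨u, hu⟩ := exists_ne z
  have hcz := hc z
  have hcu := hc u
  rw [map_zero, ind_eq_one le_rfl] at hcz
  rw [map_zero, ind_eq_zero (mt submodule_le_submodule_iff.1 hu)] at hcu
  simp only [Pi.zero_apply] at hcz hcu
  omega

/-- The sum of the indicators of `y` and `W` is ultrametric, hence so is its image. -/
lemma submodule_le_of_submodule_le [Nontrivial (ℙ k V)] {y z : ℙ k V} {A W : Submodule k V}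
    (hyW : y.submodule ≤ W) (hW : Φ (ind z.submodule) ≡ ind W [SMOD constants _])
    (hA : Ψ (ind y.submodule) ≡ ind A [SMOD constants _]) : z.submodule ≤ A := by
  have hsum := h.right.isUltrametric (isUltrametric_ind_add_ind hyW)
  rw [map_add] at hsum
  rcases le_or_le_of_isUltrametric_ind_add_ind
    (hsum.of_smodEq (hA.add (h.smodEq_symm (isUltrametric_ind _) hW))) with hAz | hzA
  · obtain ⟨p, hp⟩ := exists_submodule_le (h.symm.ne_bot_of_smodEq_ind hA)
    exact submodule_le_submodule_iff.1 (hp.trans hAz) ▸ hp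
  · exact hzA

/-- Modulo constants, `ind z` is the sum of the `ind (A y)` over the points `y` of `W`, and every
`A y` contains `z`. Moving from `z` to a point outside two of the `A y` lowers the sum by at least
`2`, but `ind z` by at most `1`. -/
lemma eq_of_submodule_le [Finite (ℙ k V)] [Nontrivial (ℙ k V)] {y₁ y₂ z : ℙ k V}
    {W : Submodule k V} (hW : Φ (ind z.submodule) ≡ ind W [SMOD constants _])
    (h₁ : y₁.submodule ≤ W) (h₂ : y₂.submodule ≤ W) : y₁ = y₂ := by
  classical
  have : Fintype (ℙ k V) := Fintype.ofFinite _
  choose A hAtop hA using h.symm.exists_smodEq_ind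
  let Y : Finset (ℙ k V) := {y | y.submodule ≤ W}
  have hsum : ∑ y ∈ Y, ind (A y) ≡ ind z.submodule [SMOD constants _] := by
    refine (SModEq.sum fun y _ ↦ (hA y).symm).trans ?_
    rw [← map_sum, sum_ind_submodule]
    exact h.smodEq_symm (isUltrametric_ind _) hW
  obtain ⟨c, hc⟩ := smodEq_constants.1 hsum
  simp only [Finset.sum_apply] at hc
  have hz : (Y.card : ℤ) = c + 1 := by
    have hcz := hc z
    rwa [ind_eq_one le_rfl, Finset.sum_congr rfl fun y hy ↦ ind_eq_one <|
      h.submodule_le_of_submodule_le (Finset.mem_filter.1 hy).2 hW (hA y), Finset.sum_const,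
      nsmul_one] at hcz
  by_contra hne
  obtain ⟨u, hu₁, hu₂⟩ := exists_not_submodule_le (hAtop y₁) (hAtop y₂)
  have hmiss : 2 ≤ ∑ y ∈ Y, (1 - ind (A y) u) := by
    calc (2 : ℤ) = ∑ y ∈ {y₁, y₂}, (1 - ind (A y) u) := by
          rw [Finset.sum_pair hne, ind_eq_zero hu₁, ind_eq_zero hu₂]; rfl
      _ ≤ ∑ y ∈ Y, (1 - ind (A y) u) := by
          refine Finset.sum_le_sum_of_subset_of_nonneg ?_ fun y _ _ ↦ sub_nonneg.2 (ind_le_one _ _)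
          simp [Finset.insert_subset_iff, Y, h₁, h₂]
  rw [Finset.sum_sub_distrib, hc, Finset.sum_const, nsmul_one, hz] at hmiss
  have := ind_nonneg z.submodule u
  omega

lemma exists_smodEq_ind_submodule [Finite (ℙ k V)] (z : ℙ k V) :
    ∃ y : ℙ k V, Φ (ind z.submodule) ≡ ind y.submodule [SMOD constants _] := by
  rcases subsingleton_or_nontrivial (ℙ k V) with _ | _
  · exact ⟨z, smodEq_of_subsingleton _ _⟩
  classical
  have : Fintype (ℙ k V) := Fintype.ofFinite _
  obtain ⟨W, -, hW⟩ := h.exists_smodEq_ind z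
  obtain ⟨y, hy⟩ := exists_submodule_le (h.ne_bot_of_smodEq_ind hW)
  have hfilter : Finset.univ.filter (fun p : ℙ k V ↦ p.submodule ≤ W) = {y} :=
    Finset.eq_singleton_iff_unique_mem.2
      ⟨by simpa using hy, fun p hp ↦ h.eq_of_submodule_le hW (Finset.mem_filter.1 hp).2 hy⟩
  refine ⟨y, ?_⟩
  rwa [← sum_ind_submodule W, hfilter, Finset.sum_singleton] at hW

theorem exists_perm [Finite (ℙ k V)] [DecidableEq (ℙ k V)] :
    ∃ σ : Equiv.Perm (ℙ k V), ∀ z,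
      Φ (Pi.single z 1) ≡ Pi.single (σ z) 1 [SMOD constants _] := by
  choose σ hσ using h.exists_smodEq_ind_submodule
  choose τ hτ using h.symm.exists_smodEq_ind_submodule
  simp only [ind_submodule] at hσ hτ
  refine ⟨⟨σ, τ, fun z ↦ single_smodEq_single ?_, fun z ↦ single_smodEq_single ?_⟩, hσ⟩
  · exact (hτ _).symm.trans (h.smodEq_symm (ind_submodule z ▸ isUltrametric_ind _) (hσ z))
  · exact (hσ _).symm.trans (h.symm.smodEq_symm (ind_submodule z ▸ isUltrametric_ind _) (hτ z))

end InverseModConstants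

end Ultrametric

section Valuation

lemma exists_smodEq_natCast {X : Type*} [Finite X] (F : X → ℤ) :
    ∃ f : X → ℕ, F ≡ (fun p ↦ (f p : ℤ)) [SMOD constants X] := by
  cases isEmpty_or_nonempty X with
  | inl _ => exact ⟨0, smodEq_of_subsingleton _ _⟩
  | inr _ =>
    obtain ⟨G, hG, hG0, -⟩ := exists_smodEq_nonneg F
    lift G to X → ℕ using hG0
    exact ⟨G, hG⟩

lemma addValuation_map_prod {R Γ ι : Type*} [CommRing R] [LinearOrderedAddCommMonoidWithTop Γ]
    (ν : AddValuation R Γ) (s : Finset ι) (a : ι → R) :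
    ν (∏ i ∈ s, a i) = ∑ i ∈ s, ν (a i) := by
  classical
  induction s using Finset.induction_on with
  | empty => exact ν.map_one
  | insert i s hi ih => rw [Finset.prod_insert hi, ν.map_mul, ih, Finset.sum_insert hi]

lemma addValuation_prod_pow {R X : Type*} [CommRing R] [Fintype X] (ν : AddValuation R ℕ∞)
    {P : X → R} {f : X → ℕ} (hν : ∀ p, ν (P p) = f p) (a : X → ℕ) :
    ν (∏ p, P p ^ a p) = (a ⬝ᵥ f : ℕ) := by
  simp [addValuation_map_prod, hν, dotProduct]

lemma addValuation_eq_of_associated {R : Type*} [CommRing R] (ν : AddValuation R ℕ∞) {a b : R}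
    (h : Associated a b) : ν a = ν b := by
  obtain ⟨u, rfl⟩ := h
  have hu : ν u + ν ↑u⁻¹ = 0 := by rw [← ν.map_mul, u.mul_inv, ν.map_one]
  rw [ν.map_mul, (add_eq_zero.1 hu).1, add_zero]

variable {k V D : Type*} [Field k] [AddCommGroup V] [Module k V] [CommRing D] [IsDomain D]
  [Algebra k D]

/-- Every bounded ultrametric function is the `X`-adic valuation of a linear family of polynomials:
split off a complement of its support as constant terms and iterate. -/
lemma exists_emultiplicity_X_eq {g : V →ₗ[k] D} (hg : Function.Injective g) (n : ℕ) :
    ∀ f : ℙ k V → ℕ, IsUltrametric (fun p ↦ (f p : ℤ)) → (∀ p, f p ≤ n) →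
      ∃ θ : V →ₗ[k] Polynomial D, ∀ v (hv : v ≠ 0),
        emultiplicity Polynomial.X (θ v) = f (mk k v hv) := by
  induction n with
  | zero =>
    intro f _ hfn
    refine ⟨(Algebra.linearMap D (Polynomial D)).restrictScalars k ∘ₗ g, fun v hv ↦ ?_⟩
    rw [Nat.le_zero.1 (hfn _), Nat.cast_zero, emultiplicity_eq_zero]
    simpa [Polynomial.X_dvd_iff] using (map_ne_zero_iff g hg).2 hv
  | succ n ih =>
    intro f hf hfn
    have hpred : IsUltrametric fun p ↦ ((f p - 1 : ℕ) : ℤ) := by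
      convert hf.pred using 2 with p
      simp only [pred]
      omega
    obtain ⟨θ, hθ⟩ := ih _ hpred fun p ↦ Nat.sub_le_of_le_add (hfn p)
    obtain ⟨W, hW⟩ := (hf.superlevel 0).exists_isCompl
    let π := W.projection _ hW.symm
    refine ⟨(Algebra.linearMap D (Polynomial D)).restrictScalars k ∘ₗ g ∘ₗ π +
      LinearMap.mulLeft k Polynomial.X ∘ₗ θ, fun v hv ↦ ?_⟩
    have hπ : π v = 0 ↔ 0 < f (mk k v hv) := by
      rw [Submodule.projection_apply_eq_zero_iff, ← Submodule.span_singleton_le_iff_mem,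
        ← submodule_mk v hv, hf.submodule_le_superlevel, Nat.cast_pos]
    rcases Nat.eq_zero_or_pos (f (mk k v hv)) with h0 | hpos
    · rw [h0, Nat.cast_zero, emultiplicity_eq_zero]
      simpa [Polynomial.X_dvd_iff, map_eq_zero_iff g hg, hπ] using h0
    · have hX : emultiplicity (Polynomial.X : Polynomial D) Polynomial.X = 1 := by
        simpa using emultiplicity_pow_self_of_prime (Polynomial.prime_X (R := D)) 1
      have hval : emultiplicity Polynomial.X (Polynomial.X * θ v) = f (mk k v hv) := by
        rw [emultiplicity_mul Polynomial.prime_X, hθ v hv, hX]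
        norm_cast
        omega
      simpa [hπ.2 hpos] using hval

end Valuation

section LinearForm

variable (k K ι : Type*) [Field k] [Field K] [Algebra k K] [Fintype ι]

/-- The linear form `∑ i, v i • X i` attached to a coefficient vector `v`. -/
noncomputable def linearForm : (ι → k) →ₗ[k] MvPolynomial ι K :=
  Fintype.linearCombination k X

variable {k ι}

lemma linearForm_apply (v : ι → k) : linearForm k K ι v = ∑ i, v i • X i := rfl

lemma linearForm_single [DecidableEq ι] (i : ι) : linearForm k K ι (Pi.single i 1) = X i := by
  simp [linearForm]

lemma coeff_linearForm (v : ι → k) (i : ι) :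
    (linearForm k K ι v).coeff (Finsupp.single i 1) = algebraMap k K (v i) := by
  classical
  simp only [linearForm_apply, coeff_sum, coeff_smul, coeff_X,
    Finsupp.single_left_inj (one_ne_zero (α := ℕ)), smul_ite, smul_zero, Finset.sum_ite_eq',
    Finset.mem_univ, if_true, Algebra.algebraMap_eq_smul_one]

lemma linearForm_injective : Function.Injective (linearForm k K ι) := fun v w h ↦ funext fun i ↦
  (algebraMap k K).injective <| by rw [← coeff_linearForm, h, coeff_linearForm]

variable {K}

lemma linearForm_ne_zero {v : ι → k} (hv : v ≠ 0) : linearForm k K ι v ≠ 0 :=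
  (map_ne_zero_iff _ (linearForm_injective K)).2 hv

variable (K)

lemma isHomogeneous_linearForm (v : ι → k) : (linearForm k K ι v).IsHomogeneous 1 := by
  refine IsHomogeneous.sum _ _ _ fun i _ ↦ ?_
  rw [← algebraMap_smul K, smul_eq_C_mul]
  exact (isHomogeneous_X K i).C_mul _

variable {K}

lemma irreducible_linearForm {v : ι → k} (hv : v ≠ 0) : Irreducible (linearForm k K ι v) := by
  obtain ⟨i, hi⟩ := Function.ne_iff.1 hv
  refine irreducible_of_totalDegree_eq_one
    ((isHomogeneous_linearForm K v).totalDegree (linearForm_ne_zero hv)) fun c hc ↦ ?_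
  refine isUnit_of_dvd_unit (coeff_linearForm K v i ▸ hc _) (IsUnit.mk0 _ ?_)
  simpa using hi

lemma aeval_linearForm [DecidableEq ι] {A : Type*} [CommRing A] [Algebra k A] [Algebra K A]
    [IsScalarTower k K A] (θ : (ι → k) →ₗ[k] A) (v : ι → k) :
    aeval (fun i ↦ θ (Pi.single i 1)) (linearForm k K ι v) = θ v := by
  conv_rhs => rw [pi_eq_sum_univ' v, map_sum]
  simp [linearForm_apply, ← algebraMap_smul K]

variable [Finite k]

lemma exists_addValuation_linearForm {f : ℙ k (ι → k) → ℕ}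
    (hf : IsUltrametric fun p ↦ (f p : ℤ)) :
    ∃ ν : AddValuation (MvPolynomial ι K) ℕ∞, ∀ v (hv : v ≠ 0),
      ν (linearForm k K ι v) = f (mk k v hv) := by
  classical
  obtain ⟨n, hn⟩ := (Set.finite_range f).bddAbove
  obtain ⟨θ, hθ⟩ := exists_emultiplicity_X_eq (linearForm_injective (k := k) K (ι := ι)) n f hf
    fun p ↦ hn ⟨p, rfl⟩
  refine ⟨(multiplicity_addValuation Polynomial.prime_X).comap
    (aeval fun i ↦ θ (Pi.single i 1)).toRingHom, fun v hv ↦ ?_⟩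
  rw [← hθ v hv, ← aeval_linearForm (K := K) θ v]
  exact multiplicity_addValuation_apply (hp := Polynomial.prime_X)

end LinearForm

section SplitSystem

variable {k K ι : Type*} [Field k] [Field K] [Algebra k K] [Fintype ι]

lemma associated_linearForm_mk_rep {v : ι → k} (hv : v ≠ 0) :
    Associated (linearForm k K ι v) (linearForm k K ι (mk k v hv).rep) := by
  obtain ⟨a, ha⟩ := exists_smul_eq_mk_rep k v hv
  rw [← ha, Units.smul_def, map_smul, ← algebraMap_smul K, smul_eq_C_mul]
  exact (associated_unit_mul_left _ _ ((a.isUnit.map (algebraMap k K)).map C)).symm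

variable (k) in
/-- The substitution `S` induces the identity of projective space, where it is defined. -/
def IsProjectiveId (S : MvPolynomial ι K →ₐ[K] MvPolynomial ι K) : Prop :=
  ∀ u v : ι → k, S (linearForm k K ι u) * linearForm k K ι v =
    linearForm k K ι u * S (linearForm k K ι v)

variable [Fintype (ℙ k (ι → k))]

variable (K) in
/-- The product of linear forms with exponents `a`, one linear form being chosen for each
`k`-rational hyperplane. -/
noncomputable def linearFormProd (a : ℙ k (ι → k) → ℕ) : MvPolynomial ι K :=
  ∏ p, linearForm k K ι p.rep ^ a p

lemma linearFormProd_ne_zero (a : ℙ k (ι → k) → ℕ) : linearFormProd K a ≠ 0 :=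
  Finset.prod_ne_zero_iff.2 fun p _ ↦ pow_ne_zero _ (linearForm_ne_zero p.rep_nonzero)

lemma isHomogeneous_linearFormProd (a : ℙ k (ι → k) → ℕ) :
    (linearFormProd K a).IsHomogeneous (∑ p, a p) :=
  IsHomogeneous.prod _ _ _ fun p _ ↦ by
    simpa only [one_mul] using (isHomogeneous_linearForm K p.rep).pow (a p)

lemma linearFormProd_add_single [DecidableEq (ℙ k (ι → k))] (a : ℙ k (ι → k) → ℕ)
    (p : ℙ k (ι → k)) :
    linearFormProd K (a + Pi.single p 1) = linearFormProd K a * linearForm k K ι p.rep := by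
  simp only [linearFormProd, Pi.add_apply, pow_add, Finset.prod_mul_distrib]
  congr 1
  simp [Pi.single_apply, pow_ite]

/-- Substitutions `X i ↦ S (X i)` by forms of one degree, under which all `k`-rational linear forms
split into `k`-rational linear forms; the matrix `e` records the exponents. -/
structure IsSplit (S : MvPolynomial ι K →ₐ[K] MvPolynomial ι K)
    (e : Matrix (ℙ k (ι → k)) (ℙ k (ι → k)) ℕ) : Prop where
  intro ::
  exists_isHomogeneous : ∃ d, ∀ v : ι → k, (S (linearForm k K ι v)).IsHomogeneous d
  associated (v : ι → k) (hv : v ≠ 0) :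
    Associated (S (linearForm k K ι v)) (linearFormProd K (e (mk k v hv)))

/-- The action on functions of an exponent matrix: it computes valuations of a split system from
those of linear forms. -/
noncomputable abbrev exponentMap {X : Type*} [Fintype X] (e : Matrix X X ℕ) :
    (X → ℤ) →ₗ[ℤ] (X → ℤ) := (e.map Nat.cast).mulVecLin

lemma exponentMap_natCast {X : Type*} [Fintype X] (e : Matrix X X ℕ) (f : X → ℕ) :
    exponentMap e (fun p ↦ (f p : ℤ)) = fun p ↦ ((e p ⬝ᵥ f : ℕ) : ℤ) := by
  funext p
  simp [Matrix.mulVec, dotProduct]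

namespace IsSplit

variable {S S' : MvPolynomial ι K →ₐ[K] MvPolynomial ι K}
  {e e' : Matrix (ℙ k (ι → k)) (ℙ k (ι → k)) ℕ}

lemma ne_zero (hS : IsSplit S e) {v : ι → k} (hv : v ≠ 0) : S (linearForm k K ι v) ≠ 0 :=
  (hS.associated v hv).ne_zero_iff.2 (linearFormProd_ne_zero _)

lemma exists_sum_eq (hS : IsSplit S e) : ∃ d, ∀ p, ∑ z, e p z = d := by
  obtain ⟨d, hd⟩ := hS.exists_isHomogeneous
  refine ⟨d, fun p ↦ ?_⟩
  obtain ⟨c, hc⟩ := hS.associated _ p.rep_nonzero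
  obtain ⟨r, -, hr⟩ := isUnit_iff_eq_C_of_isReduced.1 c.isUnit
  rw [mk_rep, hr] at hc
  have hdc : (linearFormProd K (e p)).IsHomogeneous d := by
    rw [← hc, mul_comm]
    exact (hd _).C_mul r
  exact (isHomogeneous_linearFormProd (e p)).inj_right hdc (linearFormProd_ne_zero _)

lemma addValuation_eq (hS : IsSplit S e) {ν : AddValuation (MvPolynomial ι K) ℕ∞}
    {f : ℙ k (ι → k) → ℕ} (hν : ∀ v (hv : v ≠ 0), ν (linearForm k K ι v) = f (mk k v hv))
    (v : ι → k) (hv : v ≠ 0) :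
    ν (S (linearForm k K ι v)) = (e (mk k v hv) ⬝ᵥ f : ℕ) := by
  rw [addValuation_eq_of_associated ν (hS.associated v hv)]
  exact addValuation_prod_pow ν (fun p ↦ by rw [hν _ p.rep_nonzero, mk_rep]) _

variable [Finite k]

lemma preservesUltrametric (hS : IsSplit S e) : PreservesUltrametric (exponentMap e) := by
  have map_one_mem : exponentMap e 1 ∈ constants (ℙ k (ι → k)) := by
    obtain ⟨d, hd⟩ := hS.exists_sum_eq
    refine Submodule.mem_span_singleton.2 ⟨d, funext fun p ↦ ?_⟩
    simp [← hd p, Matrix.mulVec, dotProduct]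
  refine ⟨map_one_mem, fun {F} hF ↦ ?_⟩
  obtain ⟨f, hf⟩ := exists_smodEq_natCast F
  obtain ⟨ν, hν⟩ := exists_addValuation_linearForm (K := K) (hF.of_smodEq hf)
  suffices IsUltrametric (exponentMap e fun p ↦ (f p : ℤ)) from
    this.of_smodEq (map_smodEq_map map_one_mem hf.symm)
  rw [exponentMap_natCast]
  intro v w hv hw hvw
  have := ν.map_add (S (linearForm k K ι v)) (S (linearForm k K ι w))
  rw [← map_add, ← map_add, hS.addValuation_eq hν v hv, hS.addValuation_eq hν w hw,
    hS.addValuation_eq hν _ hvw] at this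
  simpa only [min_le_iff, Nat.cast_le] using this

/-- `S ∘ S'` is projectively the identity, so it does not change valuations, up to constants. -/
lemma exponentMap_exponentMap_smodEq (hS : IsSplit S e) (hS' : IsSplit S' e')
    (h : IsProjectiveId k (S.comp S'))
    {F : ℙ k (ι → k) → ℤ} (hF : IsUltrametric F) :
    exponentMap e' (exponentMap e F) ≡ F [SMOD constants _] := by
  obtain ⟨f, hf⟩ := exists_smodEq_natCast F
  obtain ⟨ν, hν⟩ := exists_addValuation_linearForm (K := K) (hF.of_smodEq hf)
  have hνS (v : ι → k) (hv : v ≠ 0) :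
      ν (S (S' (linearForm k K ι v))) = (e' (mk k v hv) ⬝ᵥ fun p ↦ e p ⬝ᵥ f : ℕ) := by
    rw [addValuation_eq_of_associated ν ((hS'.associated v hv).map S), linearFormProd]
    simp only [map_prod, map_pow]
    exact addValuation_prod_pow ν
      (fun p ↦ by rw [hS.addValuation_eq hν _ p.rep_nonzero, mk_rep]) _
  have hΦ {F G : ℙ k (ι → k) → ℤ} := map_smodEq_map (F := F) (G := G)
    hS.preservesUltrametric.map_one_mem
  have hΨ {F G : ℙ k (ι → k) → ℤ} := map_smodEq_map (F := F) (G := G)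
    hS'.preservesUltrametric.map_one_mem
  refine (hΨ (hΦ hf)).trans (SModEq.trans ?_ hf.symm)
  rw [exponentMap_natCast, exponentMap_natCast]
  cases isEmpty_or_nonempty (ℙ k (ι → k)) with
  | inl _ => exact smodEq_of_subsingleton _ _
  | inr hne =>
    obtain ⟨q⟩ := hne
    refine smodEq_constants.2 ⟨((e' q ⬝ᵥ fun p ↦ e p ⬝ᵥ f : ℕ) : ℤ) - f q, fun p ↦ ?_⟩
    have := congrArg ν (h p.rep q.rep)
    rw [AlgHom.comp_apply, AlgHom.comp_apply, ν.map_mul, ν.map_mul, hν _ p.rep_nonzero,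
      hν _ q.rep_nonzero, hνS _ p.rep_nonzero, hνS _ q.rep_nonzero, mk_rep, mk_rep] at this
    norm_cast at this
    push_cast [← @Nat.cast_inj ℤ] at this ⊢
    linarith

lemma inverseModConstants (hS : IsSplit S e) (hS' : IsSplit S' e')
    (hSS' : IsProjectiveId k (S.comp S')) (hS'S : IsProjectiveId k (S'.comp S)) :
    InverseModConstants (exponentMap e) (exponentMap e') where
  left := hS.preservesUltrametric
  right := hS'.preservesUltrametric
  left_inv := hS.exponentMap_exponentMap_smodEq hS' hSS'
  right_inv := hS'.exponentMap_exponentMap_smodEq hS hS'S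

/-- The exponent matrix is a permutation matrix up to adding constants to its columns. -/
lemma exists_perm (hS : IsSplit S e) (h : InverseModConstants (exponentMap e) (exponentMap e')) :
    ∃ τ : Equiv.Perm (ℙ k (ι → k)), ∀ (u v : ι → k) (hu : u ≠ 0) (hv : v ≠ 0),
      Associated (S (linearForm k K ι u) * linearForm k K ι (τ (mk k v hv)).rep)
        (S (linearForm k K ι v) * linearForm k K ι (τ (mk k u hu)).rep) := by
  classical
  obtain ⟨σ, hσ⟩ := h.exists_perm
  have he (p q : ℙ k (ι → k)) :
      e p + Pi.single (σ.symm q) 1 = e q + Pi.single (σ.symm p) 1 := by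
    funext z
    obtain ⟨c, hc⟩ := smodEq_constants.1 (hσ z)
    have hp := hc p
    have hq := hc q
    simp only [Matrix.mulVecLin_apply, Matrix.mulVec_single_one, Matrix.col_apply, Matrix.map_apply,
      Pi.single_apply] at hp hq
    simp only [Pi.add_apply, Pi.single_apply, Equiv.eq_symm_apply, eq_comm (a := σ z)]
    split_ifs at hp hq ⊢ <;> omega
  refine ⟨σ.symm, fun u v hu hv ↦ ?_⟩
  have (u v : ι → k) (hu : u ≠ 0) (hv : v ≠ 0) :
      Associated (S (linearForm k K ι u) * linearForm k K ι (σ.symm (mk k v hv)).rep)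
        (linearFormProd K (e (mk k u hu) + Pi.single (σ.symm (mk k v hv)) 1)) := by
    rw [linearFormProd_add_single]
    exact (hS.associated u hu).mul_right _
  exact (he _ _ ▸ this u v hu hv).trans (this v u hv hu).symm

end IsSplit

end SplitSystem

section Linearization

/-- Comparing coefficients at a nonzero entry of `z` expresses `c'` as a `k`-linear polynomial in
`c`. -/
lemma mem_range_algebraMap_of_smul_eq {k K ι : Type*} [Field k] [Field K] [Algebra k K]
    {c c' : K} {v w z : ι → k} (hv : v ≠ 0) (hw : w ≠ 0) (hz : z ≠ 0) (hvw : mk k v hv ≠ mk k w hw)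
    (h : ∀ i, c * algebraMap k K (v i) + algebraMap k K (w i) = c' * algebraMap k K (z i)) :
    c ∈ Set.range (algebraMap k K) := by
  obtain ⟨j, hj⟩ := Function.ne_iff.1 hz
  by_cases hi : ∃ i, v j * z i - v i * z j ≠ 0
  · obtain ⟨i, hi⟩ := hi
    have hi' := (map_ne_zero (algebraMap k K)).2 hi
    refine ⟨(w i * z j - w j * z i) / (v j * z i - v i * z j), ?_⟩
    rw [map_div₀, div_eq_iff hi']
    simp only [map_sub, map_mul]
    linear_combination algebraMap k K (z j) * h i - algebraMap k K (z i) * h j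
  · push Not at hi
    have hwz (i : ι) : w j * z i = w i * z j := (algebraMap k K).injective <| by
      have := congrArg (algebraMap k K) (hi i)
      simp only [map_sub, map_mul, map_zero] at this ⊢
      linear_combination algebraMap k K (z i) * h j - algebraMap k K (z j) * h i - c * this
    have hwj : w j ≠ 0 := fun h0 ↦ hw <| funext fun i ↦
      (mul_eq_zero.1 ((hwz i).symm.trans (by rw [h0, zero_mul]))).resolve_right hj
    refine absurd ((mk_eq_mk_iff' k _ _ _ _).2 ⟨v j / w j, _root_.funext fun i ↦ ?_⟩) hvw
    rw [Pi.smul_apply, smul_eq_mul, div_mul_eq_mul_div, div_eq_iff hwj]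
    refine mul_right_cancel₀ hj ?_
    linear_combination w j * hi i - v j * hwz i

lemma eq_C_mul_of_associated {K ι : Type*} [Field K] {a b : MvPolynomial ι K} (h : Associated a b) :
    ∃ c, a = C c * b := by
  obtain ⟨u, rfl⟩ := h.symm
  obtain ⟨c, -, hc⟩ := isUnit_iff_eq_C_of_isReduced.1 u.isUnit
  exact ⟨c, by rw [hc, mul_comm]⟩

variable {k K ι : Type*} [Field k] [Field K] [Algebra k K] [Fintype ι]
  {P : (ι → k) →ₗ[k] MvPolynomial ι K} {τ : ℙ k (ι → k) → ℙ k (ι → k)}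

/-- If `P u` and `P v` correspond to the forms `t` and `s`, then `P (u + v)` corresponds to a
multiple of `c * t + s`, which is rational, so `c` is rational. -/
lemma exists_mul_linearForm_eq (hP : ∀ v ≠ 0, P v ≠ 0) (hτ : Function.Injective τ)
    (hPτ : ∀ (u v : ι → k) (hu : u ≠ 0) (hv : v ≠ 0),
      Associated (P u * linearForm k K ι (τ (mk k v hv)).rep)
        (P v * linearForm k K ι (τ (mk k u hu)).rep))
    (u v : ι → k) (hv : v ≠ 0) :
    ∃ t, P u * linearForm k K ι (τ (mk k v hv)).rep = P v * linearForm k K ι t := by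
  rcases eq_or_ne u 0 with rfl | hu
  · exact ⟨0, by simp⟩
  by_cases huv : mk k u hu = mk k v hv
  · obtain ⟨a, rfl⟩ := (mk_eq_mk_iff' k _ _ _ _).1 huv
    exact ⟨a • (τ (mk k v hv)).rep, by simp only [map_smul, smul_mul_assoc, mul_smul_comm]⟩
  have huv0 : u + v ≠ 0 := fun h ↦ huv <| (mk_eq_mk_iff' k _ _ _ _).2
    ⟨-1, by rw [neg_one_smul, ← eq_neg_of_add_eq_zero_left h]⟩
  set s := (τ (mk k v hv)).rep
  set t := (τ (mk k u hu)).rep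
  obtain ⟨c, hc⟩ := eq_C_mul_of_associated (hPτ u v hu hv)
  obtain ⟨c', hc'⟩ := eq_C_mul_of_associated (hPτ (u + v) v huv0 hv)
  set z := (τ (mk k (u + v) huv0)).rep
  have hsum : C c * linearForm k K ι t + linearForm k K ι s = C c' * linearForm k K ι z := by
    refine mul_left_cancel₀ (hP v hv) ?_
    rw [map_add] at hc'
    linear_combination hc' - hc
  obtain ⟨a, ha⟩ := mem_range_algebraMap_of_smul_eq (c := c) (c' := c')
    (τ (mk k u hu)).rep_nonzero (τ (mk k v hv)).rep_nonzero (τ (mk k (u + v) huv0)).rep_nonzero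
    (by rw [mk_rep, mk_rep]; exact hτ.ne huv) fun i ↦ by
      simpa only [coeff_add, coeff_C_mul, coeff_linearForm] using
        congrArg (coeff (Finsupp.single i 1)) hsum
  refine ⟨a • t, ?_⟩
  rw [hc, ← ha, map_smul, ← algebraMap_smul K, smul_eq_C_mul]
  ring

lemma exists_linearEquiv (hP : ∀ v ≠ 0, P v ≠ 0) (hτ : Function.Injective τ)
    (hPτ : ∀ (u v : ι → k) (hu : u ≠ 0) (hv : v ≠ 0),
      Associated (P u * linearForm k K ι (τ (mk k v hv)).rep)
        (P v * linearForm k K ι (τ (mk k u hu)).rep)) :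
    ∃ T : (ι → k) ≃ₗ[k] (ι → k), ∀ u v,
      P u * linearForm k K ι (T v) = P v * linearForm k K ι (T u) := by
  rcases subsingleton_or_nontrivial (ι → k) with _ | _
  · exact ⟨.refl k _, fun u v ↦ by rw [Subsingleton.elim u v]⟩
  obtain ⟨v, hv⟩ := exists_ne (0 : ι → k)
  choose T hT using fun u ↦ exists_mul_linearForm_eq hP hτ hPτ u v hv
  set s := linearForm k K ι (τ (mk k v hv)).rep
  have hs : s ≠ 0 := linearForm_ne_zero (τ (mk k v hv)).rep_nonzero
  have T_unique {u t} (h : P u * s = P v * linearForm k K ι t) : T u = t :=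
    linearForm_injective K (mul_left_cancel₀ (hP v hv) ((hT u).symm.trans h))
  let Tₗ : (ι → k) →ₗ[k] (ι → k) :=
    { toFun := T
      map_add' := fun u w ↦ T_unique (by rw [map_add, map_add, add_mul, hT, hT, mul_add])
      map_smul' := fun a u ↦ T_unique (by
        rw [map_smul, RingHom.id_apply, map_smul, smul_mul_assoc, hT, mul_smul_comm]) }
  have hTₗ : Function.Injective Tₗ := (injective_iff_map_eq_zero Tₗ).2 fun u hu ↦ by
    by_contra hu0
    have := hT u
    rw [show T u = 0 from hu, map_zero, mul_zero] at this
    exact mul_ne_zero (hP u hu0) hs this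
  refine ⟨.ofInjectiveEndo Tₗ hTₗ, fun u w ↦ mul_right_cancel₀ hs ?_⟩
  change P u * linearForm k K ι (T w) * s = P w * linearForm k K ι (T u) * s
  linear_combination linearForm k K ι (T w) * hT u - linearForm k K ι (T u) * hT w

end Linearization

section Discriminant

variable (k K ι : Type*) [Field k] [Field K] [Algebra k K] [Fintype ι]

/-- The product of all nonzero `k`-rational linear forms, as a polynomial over `K`: the half-space
is the locus where it does not vanish. -/
noncomputable def disc : MvPolynomial ι K :=
  ∏ᶠ v : {v : ι → k // v ≠ 0}, linearForm k K ι v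

/-- The degree of `disc`. -/
noncomputable def discDegree : ℕ := Nat.card {v : ι → k // v ≠ 0}

variable {k K ι}

lemma map_linearForm (v : ι → k) :
    map (algebraMap k K) (linearForm k k ι v) = linearForm k K ι v := by
  simp [linearForm_apply, Algebra.smul_def, MvPolynomial.algebraMap_apply]

section Substitution

variable [DecidableEq ι]

/-- The substitution in polynomials over `K` that sends each `k`-rational linear form `v` to
`T v`. -/
noncomputable def linearSubst (K : Type*) [Field K] [Algebra k K] (T : (ι → k) →ₗ[k] (ι → k)) :
    MvPolynomial ι K →ₐ[K] MvPolynomial ι K :=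
  aeval fun i ↦ (linearForm k K ι ∘ₗ T) (Pi.single i 1)

lemma linearSubst_linearForm (T : (ι → k) →ₗ[k] (ι → k)) (v : ι → k) :
    linearSubst K T (linearForm k K ι v) = linearForm k K ι (T v) :=
  aeval_linearForm _ v

lemma linearSubst_X (T : (ι → k) →ₗ[k] (ι → k)) (i : ι) :
    linearSubst K T (X i) = linearForm k K ι (T (Pi.single i 1)) :=
  aeval_X _ i

lemma linearSubst_comp (T T' : (ι → k) →ₗ[k] (ι → k)) :
    (linearSubst K T).comp (linearSubst K T') = linearSubst K (T ∘ₗ T') :=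
  algHom_ext fun i ↦ by simp [linearSubst_X, linearSubst_linearForm]

lemma linearSubst_id : linearSubst K (LinearMap.id : (ι → k) →ₗ[k] (ι → k)) = AlgHom.id K _ :=
  algHom_ext fun i ↦ by simp [linearSubst_X, linearForm_single]

lemma isHomogeneous_linearSubst (T : (ι → k) →ₗ[k] (ι → k)) {p : MvPolynomial ι K} {n : ℕ}
    (hp : p.IsHomogeneous n) : (linearSubst K T p).IsHomogeneous n :=
  one_mul n ▸ hp.aeval _ fun i ↦ isHomogeneous_linearForm K (T (Pi.single i 1))

end Substitution

variable [Finite k]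

lemma disc_ne_zero : disc k K ι ≠ 0 := by
  have := Fintype.ofFinite {v : ι → k // v ≠ 0}
  rw [disc, finprod_eq_prod_of_fintype]
  exact Finset.prod_ne_zero_iff.2 fun v _ ↦ linearForm_ne_zero v.2

lemma isHomogeneous_disc : (disc k K ι).IsHomogeneous (discDegree k ι) := by
  have := Fintype.ofFinite {v : ι → k // v ≠ 0}
  rw [disc, finprod_eq_prod_of_fintype, discDegree, Nat.card_eq_fintype_card]
  simpa using IsHomogeneous.prod Finset.univ _ _
    fun (v : {v : ι → k // v ≠ 0}) _ ↦ isHomogeneous_linearForm K v.1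

lemma disc_mem_homogeneousSubmodule :
    disc k K ι ∈ homogeneousSubmodule ι K (discDegree k ι) :=
  isHomogeneous_disc

omit [Fintype ι] in
lemma discDegree_pos [Finite ι] [Nonempty ι] : 0 < discDegree k ι := by
  obtain ⟨v, hv⟩ := exists_ne (0 : ι → k)
  have : Nonempty {v : ι → k // v ≠ 0} := ⟨v, hv⟩
  exact Nat.card_pos

lemma dvd_disc_iff_of_prime {q : MvPolynomial ι K} (hq : Prime q) :
    q ∣ disc k K ι ↔ ∃ v : ι → k, v ≠ 0 ∧ q ∣ linearForm k K ι v := by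
  have := Fintype.ofFinite {v : ι → k // v ≠ 0}
  rw [disc, finprod_eq_prod_of_fintype, hq.dvd_finsetProd_iff]
  simp

lemma linearSubst_disc [DecidableEq ι] (T : (ι → k) ≃ₗ[k] (ι → k)) :
    linearSubst K T.toLinearMap (disc k K ι) = disc k K ι := by
  have := Fintype.ofFinite {v : ι → k // v ≠ 0}
  let Tnz : {v : ι → k // v ≠ 0} ≃ {v : ι → k // v ≠ 0} :=
    T.toEquiv.subtypeEquiv fun v ↦ (map_ne_zero_iff T T.injective).symm
  rw [disc, finprod_eq_prod_of_fintype, map_prod]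
  exact Fintype.prod_equiv Tnz _ _ fun v ↦ linearSubst_linearForm _ v.1

lemma map_disc : map (algebraMap k K) (disc k k ι) = disc k K ι := by
  have := Fintype.ofFinite {v : ι → k // v ≠ 0}
  simp only [disc, finprod_eq_prod_of_fintype, map_prod, map_linearForm]

variable [Fintype (ℙ k (ι → k))]

lemma exists_associated_linearFormProd {a : MvPolynomial ι K} {n : ℕ} (ha : a ∣ disc k K ι ^ n) :
    ∃ e : ℙ k (ι → k) → ℕ, Associated a (linearFormProd K e) := by
  classical
  induction a using UniqueFactorizationMonoid.induction_on_prime with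
  | h₁ => exact absurd (zero_dvd_iff.1 ha) (pow_ne_zero n disc_ne_zero)
  | h₂ a hu => exact ⟨0, by simpa [linearFormProd] using hu⟩
  | h₃ a q _ hq ih =>
    obtain ⟨e, he⟩ := ih (dvd_of_mul_left_dvd ha)
    obtain ⟨v, hv, hqv⟩ :=
      (dvd_disc_iff_of_prime hq).1 (hq.dvd_of_dvd_pow (dvd_of_mul_right_dvd ha))
    refine ⟨e + Pi.single (mk k v hv) 1, ?_⟩
    rw [linearFormProd_add_single, mul_comm q]
    exact he.mul_mul <| (hq.irreducible.associated_of_dvd (irreducible_linearForm hv) hqv).trans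
      (associated_linearForm_mk_rep hv)

lemma exists_isSplit {S : MvPolynomial ι K →ₐ[K] MvPolynomial ι K} {d : ℕ}
    (hd : ∀ v : ι → k, (S (linearForm k K ι v)).IsHomogeneous d)
    (hS : ∀ v : ι → k, v ≠ 0 → ∃ n, S (linearForm k K ι v) ∣ disc k K ι ^ n) :
    ∃ e, IsSplit (k := k) S e := by
  have (p : ℙ k (ι → k)) :
      ∃ e : ℙ k (ι → k) → ℕ, Associated (S (linearForm k K ι p.rep)) (linearFormProd K e) :=
    let ⟨_, hn⟩ := hS _ p.rep_nonzero
    exists_associated_linearFormProd hn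
  choose e he using this
  exact ⟨e, ⟨d, hd⟩, fun v hv ↦ ((associated_linearForm_mk_rep hv).map S).trans (he _)⟩

end Discriminant

section DrinfeldRing

lemma map_aeval_mul_pow_of_isHomogeneous {F ι B L : Type*} [CommRing F] [CommRing B] [CommRing L]
    [Algebra F B] [Algebra F L] {f : B →ₐ[F] L} {σ : MvPolynomial ι F →ₐ[F] L} {x : ι → B} {s : L}
    (h : ∀ i, f (x i) * s = σ (X i)) {p : MvPolynomial ι F} {m : ℕ} (hp : p.IsHomogeneous m) :
    f (aeval x p) * s ^ m = σ p := by
  rw [aeval_unique σ, ← AlgHom.comp_apply, comp_aeval, aeval_def, aeval_def, eval₂_eq, eval₂_eq,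
    Finset.sum_mul]
  refine Finset.sum_congr rfl fun d hd ↦ ?_
  simp only [Function.comp_apply, ← h, mul_pow, Finset.prod_mul_distrib,
    Finset.prod_pow_eq_pow_sum, hp.degree_eq_sum_deg_support hd, mul_assoc]

variable {k F ι L B : Type*} [Field k] [Field F] [Algebra k F] [Fintype ι]
  [CommRing L] [Algebra F L] [Algebra (MvPolynomial ι F) L]
  [CommRing B] [Algebra F B]

variable (k ι) in
/-- `B` is embedded by `j` as the ring of functions on the half-space over `F`: fractions of degree
zero whose denominator is a power of `disc`. -/
structure IsDrinfeldRing (j : B →ₐ[F] L) : Prop where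
  injective : Function.Injective j
  exists_mul_disc_pow (b : B) : ∃ (n : ℕ) (p : MvPolynomial ι F),
    p.IsHomogeneous (n * discDegree k ι) ∧
      j b * algebraMap _ L (disc k F ι) ^ n = algebraMap _ L p
  exists_mul_linearForm (u v : ι → k) (hv : v ≠ 0) : ∃ b,
    j b * algebraMap _ L (linearForm k F ι v) = algebraMap _ L (linearForm k F ι u)

/-- If `j b` is a quotient of forms of one degree, then `f b` is the quotient of their images
under `S`; since those images may vanish, this is stated without division. -/
def IsHomogeneousLift (j f : B →ₐ[F] L) (S : MvPolynomial ι F →ₐ[F] MvPolynomial ι F) : Prop :=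
  ∀ ⦃b : B⦄ ⦃m : ℕ⦄ ⦃p q : MvPolynomial ι F⦄, p.IsHomogeneous m → q.IsHomogeneous m →
    j b * algebraMap _ L q = algebraMap _ L p →
      f b * algebraMap _ L (S q) = algebraMap _ L (S p)

namespace IsDrinfeldRing

variable {j : B →ₐ[F] L} {x : ι → B} {v₀ : ι → k}

lemma exists_mul_linearForm_eq_X (hj : IsDrinfeldRing k ι j) (hv₀ : v₀ ≠ 0) :
    ∃ x : ι → B, ∀ i,
      j (x i) * algebraMap _ L (linearForm k F ι v₀) = algebraMap (MvPolynomial ι F) L (X i) := by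
  classical
  choose x hx using fun i : ι ↦ hj.exists_mul_linearForm (Pi.single i 1) v₀ hv₀
  exact ⟨x, fun i ↦ by rw [hx, linearForm_single]⟩

lemma exists_forall_mul_disc_pow [Finite k] (hj : IsDrinfeldRing k ι j) {X : Type*} [Finite X]
    (b : X → B) :
    ∃ n, ∀ x, ∃ p : MvPolynomial ι F, p.IsHomogeneous (n * discDegree k ι) ∧
      j (b x) * algebraMap _ L (disc k F ι) ^ n = algebraMap _ L p := by
  cases nonempty_fintype X
  choose n p hp hnp using fun x ↦ hj.exists_mul_disc_pow (b x)
  have hn (x : X) : n x ≤ ∑ y, n y := Finset.single_le_sum_of_canonicallyOrdered (Finset.mem_univ x)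
  refine ⟨∑ x, n x, fun x ↦ ⟨p x * disc k F ι ^ (∑ y, n y - n x), ?_, ?_⟩⟩
  · convert (hp x).mul ((isHomogeneous_disc (k := k)).pow (∑ y, n y - n x)) using 1
    rw [mul_comm (discDegree k ι), ← add_mul, Nat.add_sub_of_le (hn x)]
  · rw [map_mul, ← hnp, map_pow, mul_assoc, ← pow_add, Nat.add_sub_of_le (hn x)]

variable [FaithfulSMul (MvPolynomial ι F) L]

lemma isProjectiveId_comp (hj : IsDrinfeldRing k ι j) {φ φ' : B →ₐ[F] B}
    {S S' : MvPolynomial ι F →ₐ[F] MvPolynomial ι F} (hS : IsHomogeneousLift j (j.comp φ) S)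
    (hS' : IsHomogeneousLift j (j.comp φ') S') {d : ℕ}
    (hd : ∀ v : ι → k, (S' (linearForm k F ι v)).IsHomogeneous d)
    (hφ : φ.comp φ' = AlgHom.id F B) :
    IsProjectiveId k (S.comp S') := by
  intro u v
  rcases eq_or_ne v 0 with rfl | hv
  · simp
  obtain ⟨b, hb⟩ := hj.exists_mul_linearForm u v hv
  have hb' := hS (b := φ' b) (hd u) (hd v) <|
    hS' (isHomogeneous_linearForm F u) (isHomogeneous_linearForm F v) hb
  have hφb : j.comp φ (φ' b) = j b := congrArg j (DFunLike.congr_fun hφ b)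
  refine FaithfulSMul.algebraMap_injective _ L ?_
  rw [map_mul, map_mul, ← hb, AlgHom.comp_apply, AlgHom.comp_apply, ← hb', hφb]
  ring

variable [IsScalarTower F (MvPolynomial ι F) L] [IsDomain L]

/-- Dehomogenizing at `v₀`: with `x i = X i / v₀`, the polynomials `q` and `p` can be evaluated at
`x` inside `B`, and `f` can be applied to the relation `b * q(x) = p(x)`. -/
lemma isHomogeneousLift (hj : IsDrinfeldRing k ι j) (hv₀ : v₀ ≠ 0) {f : B →ₐ[F] L} {s : L}
    (hs : s ≠ 0) {S : MvPolynomial ι F →ₐ[F] MvPolynomial ι F}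
    (hx : ∀ i, j (x i) * algebraMap _ L (linearForm k F ι v₀) =
      algebraMap (MvPolynomial ι F) L (X i))
    (hS : ∀ i, f (x i) * s = algebraMap _ L (S (X i))) :
    IsHomogeneousLift j f S := by
  intro b m p q hp hq hb
  have hjx {r : MvPolynomial ι F} (hr : r.IsHomogeneous m) :=
    map_aeval_mul_pow_of_isHomogeneous (σ := IsScalarTower.toAlgHom F _ L) hx hr
  have hfx {r : MvPolynomial ι F} (hr : r.IsHomogeneous m) :=
    map_aeval_mul_pow_of_isHomogeneous (σ := (IsScalarTower.toAlgHom F _ L).comp S)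
      hS hr
  simp only [IsScalarTower.coe_toAlgHom', AlgHom.comp_apply] at hjx hfx
  have hne : algebraMap _ L (linearForm k F ι v₀) ^ m ≠ 0 := pow_ne_zero _ <| by
    simpa using linearForm_ne_zero hv₀
  have hbx : b * aeval x q = aeval x p := hj.injective <| mul_right_cancel₀ hne <| by
    rw [map_mul, mul_assoc, hjx hq, hjx hp, hb]
  refine mul_right_cancel₀ (pow_ne_zero m hs) ?_
  rw [← hfx hq, ← hfx hp, ← hbx, map_mul]
  ring

lemma aeval_linearForm_eq_one (hj : IsDrinfeldRing k ι j) (hv₀ : v₀ ≠ 0)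
    (hx : ∀ i, j (x i) * algebraMap _ L (linearForm k F ι v₀) =
      algebraMap (MvPolynomial ι F) L (X i)) :
    aeval x (linearForm k F ι v₀) = 1 := by
  have hne : algebraMap _ L (linearForm k F ι v₀) ≠ 0 := by simpa using linearForm_ne_zero hv₀
  have := map_aeval_mul_pow_of_isHomogeneous (σ := IsScalarTower.toAlgHom F _ L) hx
    (isHomogeneous_linearForm F v₀)
  refine hj.injective (mul_right_cancel₀ hne ?_)
  rw [map_one, one_mul]
  rwa [pow_one] at this

lemma exists_isHomogeneousLift [Finite k] [Nontrivial (ι → k)] (hj : IsDrinfeldRing k ι j)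
    (φ : B →ₐ[F] B) :
    ∃ S : MvPolynomial ι F →ₐ[F] MvPolynomial ι F, IsHomogeneousLift j (j.comp φ) S ∧
      (∃ d, ∀ v : ι → k, (S (linearForm k F ι v)).IsHomogeneous d) ∧
      ∀ v : ι → k, v ≠ 0 → ∃ n, S (linearForm k F ι v) ∣ disc k F ι ^ n := by
  obtain ⟨v₀, hv₀⟩ := exists_ne (0 : ι → k)
  obtain ⟨x, hx⟩ := hj.exists_mul_linearForm_eq_X hv₀
  obtain ⟨n, hn⟩ := hj.exists_forall_mul_disc_pow fun i ↦ φ (x i)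
  choose P hP hPx using hn
  have hdisc : algebraMap _ L (disc k F ι) ^ n ≠ 0 := pow_ne_zero _ <| by simpa using disc_ne_zero
  have hS (i : ι) : j.comp φ (x i) * algebraMap _ L (disc k F ι) ^ n =
      algebraMap _ L (aeval P (X i : MvPolynomial ι F)) := by
    rw [aeval_X, ← hPx, AlgHom.comp_apply]
  have lift := hj.isHomogeneousLift hv₀ hdisc hx hS
  refine ⟨aeval P, lift, ⟨_, fun v ↦ (isHomogeneous_linearForm F v).aeval P hP⟩, fun v hv ↦ ?_⟩
  have aeval_linearForm_v₀ : aeval P (linearForm k F ι v₀) = disc k F ι ^ n := by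
    have := map_aeval_mul_pow_of_isHomogeneous
      (σ := (IsScalarTower.toAlgHom F _ L).comp (aeval P)) hS (isHomogeneous_linearForm F v₀)
    rw [hj.aeval_linearForm_eq_one hv₀ hx, map_one, one_mul, pow_one] at this
    exact FaithfulSMul.algebraMap_injective _ L (by rw [map_pow]; exact this.symm)
  obtain ⟨b, hb⟩ := hj.exists_mul_linearForm v₀ v hv
  obtain ⟨r, p, -, hp⟩ := hj.exists_mul_disc_pow (φ b)
  have hb' := lift (isHomogeneous_linearForm F v₀) (isHomogeneous_linearForm F v) hb
  refine ⟨n + r, Dvd.intro p <| FaithfulSMul.algebraMap_injective _ L ?_⟩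
  rw [aeval_linearForm_v₀, map_pow, AlgHom.comp_apply] at hb'
  rw [map_mul, ← hp, pow_add, map_mul, map_pow, map_pow, ← hb']
  ring

theorem exists_isHomogeneousLift_linearSubst [Finite k] [Nontrivial (ι → k)] [DecidableEq ι]
    (hj : IsDrinfeldRing k ι j) (φ : B ≃ₐ[F] B) :
    ∃ T : (ι → k) ≃ₗ[k] (ι → k),
      IsHomogeneousLift j (j.comp φ) (linearSubst F T.toLinearMap) := by
  cases nonempty_fintype (ℙ k (ι → k))
  obtain ⟨S, hS, ⟨d, hd⟩, hSd⟩ := hj.exists_isHomogeneousLift φ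
  obtain ⟨S', hS', ⟨d', hd'⟩, hSd'⟩ := hj.exists_isHomogeneousLift φ.symm
  obtain ⟨e, he⟩ := exists_isSplit hd hSd
  obtain ⟨e', he'⟩ := exists_isSplit hd' hSd'
  obtain ⟨τ, hτ⟩ := he.exists_perm <| he.inverseModConstants he'
    (hj.isProjectiveId_comp hS hS' hd' (by simp)) (hj.isProjectiveId_comp hS' hS hd (by simp))
  obtain ⟨T, hT⟩ := exists_linearEquiv
    (P := (S.restrictScalars k).toLinearMap ∘ₗ linearForm k F ι) (fun v hv ↦ he.ne_zero hv)
    τ.injective hτ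
  simp only [LinearMap.comp_apply, AlgHom.toLinearMap_apply, AlgHom.restrictScalars_apply] at hT
  obtain ⟨v₀, hv₀⟩ := exists_ne (0 : ι → k)
  obtain ⟨x, hx⟩ := hj.exists_mul_linearForm_eq_X hv₀
  refine ⟨T, hj.isHomogeneousLift (s := algebraMap _ L (linearForm k F ι (T v₀))) hv₀
    (by simpa using linearForm_ne_zero ((map_ne_zero_iff T T.injective).2 hv₀)) hx fun i ↦ ?_⟩
  have hSv₀ : algebraMap _ L (S (linearForm k F ι v₀)) ≠ 0 := by simpa using he.ne_zero hv₀
  have hSx := hS (isHomogeneous_X F i) (isHomogeneous_linearForm F v₀) (hx i)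
  refine mul_right_cancel₀ hSv₀ ?_
  have := congrArg (algebraMap _ L) (hT (Pi.single i 1) v₀)
  rw [linearForm_single, map_mul, map_mul] at this
  rw [linearSubst_X, LinearEquiv.coe_coe]
  linear_combination algebraMap _ L (linearForm k F ι (T v₀)) * hSx + this

end IsDrinfeldRing
end DrinfeldRing

section BaseChange

open TensorProduct

attribute [local instance] MvPolynomial.algebraMvPolynomial

lemma eq_zero_of_sum_C_mul_map_eq_zero {k K ι X : Type*} [CommRing k] [CommRing K] [Algebra k K]
    {b : X → K} (hb : LinearIndependent k b) {s : Finset X} {p : X → MvPolynomial ι k}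
    (h : ∑ i ∈ s, C (b i) * map (algebraMap k K) (p i) = 0) : ∀ i ∈ s, p i = 0 := by
  intro i hi
  ext d
  refine linearIndependent_iff'.1 hb s (fun i ↦ coeff d (p i)) ?_ i hi
  simpa [coeff_sum, coeff_C_mul, coeff_map, Algebra.smul_def, mul_comm] using congrArg (coeff d) h

lemma map_linearSubst {k ι : Type*} [Field k] [Fintype ι] [DecidableEq ι] (K : Type*) [Field K]
    [Algebra k K] (T : (ι → k) →ₗ[k] (ι → k)) (p : MvPolynomial ι k) :
    map (algebraMap k K) (linearSubst k T p) = linearSubst K T (map (algebraMap k K) p) := by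
  change (mapAlgHom (Algebra.ofId k K)).comp (linearSubst k T) p =
    ((linearSubst K T).restrictScalars k).comp (mapAlgHom (Algebra.ofId k K)) p
  congr 1
  refine algHom_ext fun i ↦ ?_
  simp [linearSubst_X, map_linearForm, Algebra.toRingHom_ofId]

lemma algebraMap_map {k K ι : Type*} [CommRing k] [CommRing K] [Algebra k K] (L : Type*)
    [CommRing L] [Algebra (MvPolynomial ι k) L] [Algebra (MvPolynomial ι K) L]
    [IsScalarTower (MvPolynomial ι k) (MvPolynomial ι K) L] (p : MvPolynomial ι k) :
    algebraMap (MvPolynomial ι K) L (map (algebraMap k K) p) = algebraMap _ L p :=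
  (IsScalarTower.algebraMap_apply _ (MvPolynomial ι K) L p).symm

namespace IsDrinfeldRing

variable {k K ι A L : Type*} [Field k] [Field K] [Algebra k K] [Fintype ι] [Finite k]
  [CommRing A] [Algebra k A] [CommRing L] [Algebra k L] [Algebra K L] [IsScalarTower k K L]
  [Algebra (MvPolynomial ι k) L] [Algebra (MvPolynomial ι K) L]
  [IsScalarTower (MvPolynomial ι k) (MvPolynomial ι K) L] [IsScalarTower K (MvPolynomial ι K) L]
  [IsDomain L] [FaithfulSMul (MvPolynomial ι K) L] {j : A →ₐ[k] L}

lemma injective_liftEquiv (hj : IsDrinfeldRing k ι j) :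
    Function.Injective (AlgHom.liftEquiv k K A L j) := by
  refine (injective_iff_map_eq_zero _).2 fun x hx ↦ ?_
  let b := Module.Basis.ofVectorSpace k K
  obtain ⟨c, rfl⟩ := TensorProduct.eq_repr_basis_left b x
  obtain ⟨n, hn⟩ := hj.exists_forall_mul_disc_pow fun i : c.support ↦ c i
  choose p _ hp using hn
  have hsum : ∑ i, C (b i.1) * map (algebraMap k K) (p i) = 0 := by
    refine FaithfulSMul.algebraMap_injective _ L ?_
    rw [map_zero, ← zero_mul (algebraMap _ L (disc k k ι) ^ n), ← hx, Finsupp.sum,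
      ← Finset.sum_coe_sort c.support fun i ↦ b i ⊗ₜ[k] c i, map_sum, map_sum, Finset.sum_mul]
    refine Finset.sum_congr rfl fun i _ ↦ ?_
    rw [AlgHom.liftEquiv_tmul, smul_mul_assoc, hp, map_mul, algebraMap_map, ← algebraMap_eq,
      ← IsScalarTower.algebraMap_apply, Algebra.smul_def]
  have hp_zero := eq_zero_of_sum_C_mul_map_eq_zero
    (b.linearIndependent.comp _ Subtype.val_injective) hsum
  have hdisc : algebraMap _ L (disc k k ι) ≠ 0 := by
    rw [← algebraMap_map (K := K), map_disc]
    exact (map_ne_zero_iff _ (FaithfulSMul.algebraMap_injective _ L)).2 disc_ne_zero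
  refine Finset.sum_eq_zero fun i hi ↦ ?_
  have hji : j (c i) * algebraMap _ L (disc k k ι) ^ n = 0 := by
    rw [hp ⟨i, hi⟩, hp_zero _ (Finset.mem_univ _), map_zero]
  have hci : c i = 0 :=
    (map_eq_zero_iff j hj.injective).1 ((mul_eq_zero_iff_right (pow_ne_zero n hdisc)).1 hji)
  simp only [hci, tmul_zero]

lemma liftEquiv (hj : IsDrinfeldRing k ι j) :
    IsDrinfeldRing k ι (AlgHom.liftEquiv k K A L j) where
  injective := hj.injective_liftEquiv
  exists_mul_disc_pow b := by
    have hdisc (n : ℕ) := (isHomogeneous_disc (k := k) (K := K) (ι := ι)).pow n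
    induction b using TensorProduct.induction_on with
    | zero => exact ⟨0, 0, isHomogeneous_zero _ _ _, by simp⟩
    | tmul c a =>
      obtain ⟨n, p, hp, hap⟩ := hj.exists_mul_disc_pow a
      refine ⟨n, C c * map (algebraMap k K) p, ?_, ?_⟩
      · simpa using (isHomogeneous_C ι c).mul (hp.map (algebraMap k K))
      · rw [map_mul, algebraMap_map, ← hap, ← map_disc, algebraMap_map, ← algebraMap_eq,
          ← IsScalarTower.algebraMap_apply, AlgHom.liftEquiv_tmul, Algebra.smul_def, mul_assoc]
    | add x y hx hy =>
      obtain ⟨n, p, hp, hxp⟩ := hx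
      obtain ⟨n', p', hp', hyp'⟩ := hy
      refine ⟨n + n', p * disc k K ι ^ n' + p' * disc k K ι ^ n, .add ?_ ?_, ?_⟩
      · convert hp.mul (hdisc n') using 1
        ring
      · convert hp'.mul (hdisc n) using 1
        ring
      · simp only [map_add, map_mul, map_pow, ← hxp, ← hyp']
        ring
  exists_mul_linearForm u v hv := by
    obtain ⟨a, ha⟩ := hj.exists_mul_linearForm u v hv
    refine ⟨1 ⊗ₜ a, ?_⟩
    rw [AlgHom.liftEquiv_tmul, one_smul, ← map_linearForm (K := K) u, ← map_linearForm (K := K) v,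
      algebraMap_map, algebraMap_map, ha]

theorem exists_linearEquiv_tmul [Nontrivial (ι → k)] [DecidableEq ι] (hj : IsDrinfeldRing k ι j)
    (φ : K ⊗[k] A ≃ₐ[K] K ⊗[k] A) :
    ∃ T : (ι → k) ≃ₗ[k] (ι → k), ∀ (a a' : A) (n : ℕ) (p : MvPolynomial ι k),
      p.IsHomogeneous (n * discDegree k ι) →
      j a * algebraMap _ L (disc k k ι) ^ n = algebraMap _ L p →
      j a' * algebraMap _ L (disc k k ι) ^ n = algebraMap _ L (linearSubst k T.toLinearMap p) →
        φ (1 ⊗ₜ a) = 1 ⊗ₜ a' := by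
  obtain ⟨T, hT⟩ := hj.liftEquiv.exists_isHomogeneousLift_linearSubst φ
  refine ⟨T, fun a a' n p hp hap hap' ↦ hj.injective_liftEquiv ?_⟩
  have hdisc : algebraMap _ L (disc k K ι) ≠ 0 :=
    (map_ne_zero_iff _ (FaithfulSMul.algebraMap_injective _ L)).2 disc_ne_zero
  have hφa := hT (b := 1 ⊗ₜ a) (q := disc k K ι ^ n) (hp.map (algebraMap k K))
    (mul_comm n _ ▸ isHomogeneous_disc.pow n) (by
      rw [AlgHom.liftEquiv_tmul, one_smul, map_pow, ← map_disc (K := K), algebraMap_map,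
        algebraMap_map, hap])
  rw [← map_linearSubst, algebraMap_map, ← hap', map_pow, linearSubst_disc, map_pow] at hφa
  refine mul_right_cancel₀ (pow_ne_zero n hdisc) (hφa.trans ?_)
  rw [AlgHom.liftEquiv_tmul, one_smul, ← map_disc (K := K), algebraMap_map]

end IsDrinfeldRing

end BaseChange

section Away

open HomogeneousLocalization

variable {R A : Type*} [CommRing R] [CommRing A] [Algebra R A] {𝒜 : ℕ → Submodule R A}
  [GradedAlgebra 𝒜]

lemma coe_projZeroRingHom'_algebraMap (r : R) :
    (GradedRing.projZeroRingHom' 𝒜 (algebraMap R A r) : A) = algebraMap R A r :=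
  DirectSum.decompose_of_mem_same _ (SetLike.algebraMap_mem_graded 𝒜 r)

/-- The `R`-algebra structure on a homogeneous localization of a graded `R`-algebra. Its structure
map is the one through the degree zero part, to match the definition of `projStruct`. -/
noncomputable instance algebraHomogeneousLocalization (x : Submonoid A) :
    Algebra R (HomogeneousLocalization 𝒜 x) where
  algebraMap := (fromZeroRingHom 𝒜 x).comp
    ((GradedRing.projZeroRingHom' 𝒜).comp (algebraMap R A))
  commutes' _ _ := mul_comm _ _
  smul_def' r y := by
    ext
    rw [val_smul, val_mul, Algebra.smul_def, IsScalarTower.algebraMap_apply R A]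
    congr 1
    rw [← Localization.mk_one_eq_algebraMap, ← coe_projZeroRingHom'_algebraMap (𝒜 := 𝒜) r]
    rfl

lemma val_algebraMap (x : Submonoid A) (r : R) :
    (algebraMap R (HomogeneousLocalization 𝒜 x) r).val =
      algebraMap A (Localization x) (algebraMap R A r) := by
  have h := congrArg HomogeneousLocalization.val
    (Algebra.algebraMap_eq_smul_one (A := HomogeneousLocalization 𝒜 x) r)
  rw [h, val_smul, val_one, Algebra.smul_def, mul_one, IsScalarTower.algebraMap_apply R A]

lemma awayMap_algebraMap (g : 𝒜 →+*ᵍ 𝒜) (f : A) {r : R}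
    (hr : g (algebraMap R A r) = algebraMap R A r) :
    Away.map g f (algebraMap R (Away 𝒜 f) r) = algebraMap R (Away 𝒜 (g f)) r := by
  ext
  rw [val_algebraMap, ← Localization.mk_one_eq_algebraMap]
  change Localization.mk (g (GradedRing.projZeroRingHom' 𝒜 (algebraMap R A r))) ⟨g 1, _⟩ = _
  rw [coe_projZeroRingHom'_algebraMap, hr]
  congr
  exact map_one g

variable {L : Type*} [CommRing L] [Algebra R L] [Algebra A L] [IsScalarTower R A L] {f : A}

/-- The evaluation in `L` of fractions of degree zero with denominator a power of `f`, for `f`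
invertible in `L`. -/
noncomputable def awayLift (hf : IsUnit (algebraMap A L f)) : Away 𝒜 f →ₐ[R] L where
  __ := (Localization.awayLift (algebraMap A L) f hf).comp
    (algebraMap (Away 𝒜 f) (Localization.Away f))
  commutes' r := by
    change Localization.awayLift (algebraMap A L) f hf (algebraMap R (Away 𝒜 f) r).val = _
    rw [val_algebraMap, IsLocalization.Away.lift_eq, ← IsScalarTower.algebraMap_apply]

lemma awayLift_mk_mul_pow (hf : IsUnit (algebraMap A L f)) {d : ℕ} (hd : f ∈ 𝒜 d) {n : ℕ} {p : A}
    (hp : p ∈ 𝒜 (n • d)) :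
    awayLift hf (Away.mk 𝒜 hd n p hp) * algebraMap A L f ^ n = algebraMap A L p := by
  change Localization.awayLift (algebraMap A L) f hf (Away.mk 𝒜 hd n p hp).val * _ = _
  have hlift (q : A) : Localization.awayLift (algebraMap A L) f hf (algebraMap A _ q) =
      algebraMap A L q := IsLocalization.Away.lift_eq f hf q
  rw [← hlift f, ← hlift p, ← map_pow, ← map_mul, ← map_pow, Away.val_mk,
    Localization.mk_eq_mk']
  exact congrArg _ (IsLocalization.mk'_spec _ p _)

lemma awayLift_injective [FaithfulSMul A L] (hf : IsUnit (algebraMap A L f)) {d : ℕ}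
    (hd : f ∈ 𝒜 d) : Function.Injective (awayLift (R := R) (𝒜 := 𝒜) hf) := by
  refine (injective_iff_map_eq_zero _).2 fun a ha ↦ ?_
  obtain ⟨n, p, hp, rfl⟩ := Away.mk_surjective 𝒜 hd a
  have hp0 := awayLift_mk_mul_pow hf hd hp
  rw [ha, zero_mul, eq_comm, map_eq_zero_iff _ (FaithfulSMul.algebraMap_injective A L)] at hp0
  ext
  simp [hp0, Localization.mk_zero]

end Away

section HalfSpaceRing

open HomogeneousLocalization

variable {k ι : Type*} [Field k] [Finite k] [Fintype ι]

lemma exists_isHomogeneous_mul_linearForm_eq (u : ι → k) {v : ι → k} (hv : v ≠ 0) :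
    ∃ p : MvPolynomial ι k, p.IsHomogeneous (discDegree k ι) ∧
      p * linearForm k k ι v = linearForm k k ι u * disc k k ι := by
  classical
  have := Fintype.ofFinite {v : ι → k // v ≠ 0}
  let v' : {v : ι → k // v ≠ 0} := ⟨v, hv⟩
  let w : {v : ι → k // v ≠ 0} → ι → k := Function.update Subtype.val v' u
  have hw : w v' = u := Function.update_self _ _ _
  refine ⟨∏ x, linearForm k k ι (w x), ?_, ?_⟩
  · rw [discDegree, Nat.card_eq_fintype_card]
    simpa using IsHomogeneous.prod Finset.univ _ _ fun x _ ↦ isHomogeneous_linearForm k (w x)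
  · have hprod : ∏ x ∈ Finset.univ.erase v', linearForm k k ι (w x) =
        ∏ x ∈ Finset.univ.erase v', linearForm k k ι x :=
      Finset.prod_congr rfl fun x hx ↦
        congrArg _ (Function.update_of_ne (Finset.ne_of_mem_erase hx) _ _)
    rw [disc, finprod_eq_prod_of_fintype, ← Finset.mul_prod_erase _ _ (Finset.mem_univ v'),
      ← Finset.mul_prod_erase _ _ (Finset.mem_univ v'), hprod, hw]
    ring

variable {L : Type*} [Field L] [Algebra (MvPolynomial ι k) L] [FaithfulSMul (MvPolynomial ι k) L]

lemma isUnit_algebraMap_disc : IsUnit (algebraMap _ L (disc k k ι)) :=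
  ((map_ne_zero_iff _ (FaithfulSMul.algebraMap_injective _ L)).2 disc_ne_zero).isUnit

lemma isDrinfeldRing_awayLift [Algebra k L] [IsScalarTower k (MvPolynomial ι k) L] :
    IsDrinfeldRing k ι
      (awayLift (𝒜 := homogeneousSubmodule ι k) (isUnit_algebraMap_disc (L := L))) where
  injective := awayLift_injective _ disc_mem_homogeneousSubmodule
  exists_mul_disc_pow a := by
    obtain ⟨n, p, hp, rfl⟩ := Away.mk_surjective _ disc_mem_homogeneousSubmodule a
    exact ⟨n, p, hp, awayLift_mk_mul_pow _ _ hp⟩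
  exists_mul_linearForm u v hv := by
    obtain ⟨p, hp, hpv⟩ := exists_isHomogeneous_mul_linearForm_eq u hv
    replace hp : p ∈ homogeneousSubmodule ι k (1 • discDegree k ι) := by rwa [one_smul]
    refine ⟨Away.mk _ disc_mem_homogeneousSubmodule 1 p hp, ?_⟩
    have hmk := awayLift_mk_mul_pow (isUnit_algebraMap_disc (L := L))
      disc_mem_homogeneousSubmodule hp
    refine (isUnit_algebraMap_disc (k := k) (ι := ι)).mul_right_cancel ?_
    rw [mul_right_comm, ← map_mul, ← hpv, map_mul, ← hmk, pow_one]

end HalfSpaceRing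

section ProjectiveLinear

lemma irrelevant_le_map_of_rightInverse {A σ : Type*} [CommRing A] [SetLike σ A]
    [AddSubgroupClass σ A] {𝒜 : ℕ → σ} [GradedRing 𝒜] (g h : 𝒜 →+*ᵍ 𝒜)
    (hgh : Function.RightInverse h g) :
    HomogeneousIdeal.irrelevant 𝒜 ≤ (HomogeneousIdeal.irrelevant 𝒜).map g := by
  rw [HomogeneousIdeal.irrelevant_le]
  intro i hi x hx
  have hhx : h x ∈ (HomogeneousIdeal.irrelevant 𝒜).toIdeal :=
    HomogeneousIdeal.mem_irrelevant_of_mem _ hi (h.2 hx)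
  exact hgh x ▸ Ideal.mem_map_of_mem g hhx

variable {k ι : Type*} [Field k] [Fintype ι] [DecidableEq ι]

/-- The substitution `linearSubst` as a homomorphism of graded rings. -/
noncomputable def gradedLinearSubst (T : (ι → k) →ₗ[k] (ι → k)) :
    homogeneousSubmodule ι k →+*ᵍ homogeneousSubmodule ι k where
  __ := (linearSubst k T).toRingHom
  map_mem hp := isHomogeneous_linearSubst T hp

lemma gradedLinearSubst_comp_symm (T : (ι → k) ≃ₗ[k] (ι → k)) :
    (gradedLinearSubst T.toLinearMap).comp (gradedLinearSubst T.symm.toLinearMap) =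
      .id (homogeneousSubmodule ι k) := by
  have hT := linearSubst_comp (K := k) T.toLinearMap T.symm.toLinearMap
  rw [LinearEquiv.comp_symm, linearSubst_id] at hT
  exact DFunLike.ext _ _ fun p ↦ DFunLike.congr_fun hT p

lemma irrelevant_le_map_gradedLinearSubst (T : (ι → k) ≃ₗ[k] (ι → k)) :
    HomogeneousIdeal.irrelevant (homogeneousSubmodule ι k) ≤
      (HomogeneousIdeal.irrelevant (homogeneousSubmodule ι k)).map
        (gradedLinearSubst T.toLinearMap) :=
  irrelevant_le_map_of_rightInverse _ (gradedLinearSubst T.symm.toLinearMap)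
    (DFunLike.congr_fun (gradedLinearSubst_comp_symm T))

end ProjectiveLinear

section Schemes

open HomogeneousLocalization

lemma exists_awayι_comp_map_eq {A σ : Type u} [CommRing A] [SetLike σ A] [AddSubgroupClass σ A]
    {𝒜 : ℕ → σ} [GradedRing 𝒜] (g : 𝒜 →+*ᵍ 𝒜)
    (hg : HomogeneousIdeal.irrelevant 𝒜 ≤ (HomogeneousIdeal.irrelevant 𝒜).map g)
    {d : ℕ} (hd : 0 < d) {f f' : A} (hf : f ∈ 𝒜 d) (hf' : f' ∈ 𝒜 d) (h : g f = f') :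
    ∃ γ : Away 𝒜 f →+* Away 𝒜 f',
      (∀ n p hp, γ (Away.mk 𝒜 hf n p hp) = Away.mk 𝒜 hf' n (g p) (g.2 hp)) ∧
      Proj.awayι 𝒜 f' hf' hd ≫ Proj.map g hg =
        Spec.map (CommRingCat.ofHom γ) ≫ Proj.awayι 𝒜 f hf hd := by
  subst h
  exact ⟨Away.map g f, Away.map_mk g f hf, Proj.awayι_comp_map g hg hd f hf⟩

variable {k : Type u} [Field k] {m : ℕ}

lemma isEmpty_projSpace_zero : IsEmpty (projSpace k 0) := by
  refine ⟨fun x ↦ x.not_irrelevant_le ?_⟩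
  rw [HomogeneousIdeal.irrelevant_le]
  intro i hi p (hp : p.IsHomogeneous i)
  suffices p = 0 from this ▸ Ideal.zero_mem _
  by_contra hp0
  have hp' : p.IsHomogeneous 0 := by
    rw [eq_C_of_isEmpty p]
    exact isHomogeneous_C _ _
  exact hi.ne' (hp.inj_right hp' hp0)

/-- The automorphism of projective space given by a linear automorphism `T` of the space of linear
forms, acting contravariantly. -/
noncomputable def projIso (T : (Fin m → k) ≃ₗ[k] (Fin m → k)) : projSpace k m ≅ projSpace k m where
  hom := Proj.map _ (irrelevant_le_map_gradedLinearSubst T)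
  inv := Proj.map _ (irrelevant_le_map_gradedLinearSubst T.symm)
  hom_inv_id := by
    rw [← Proj.map_comp, ← Proj.map_id]
    congr 1
    exact gradedLinearSubst_comp_symm T
  inv_hom_id := by
    rw [← Proj.map_comp, ← Proj.map_id]
    congr 1
    exact gradedLinearSubst_comp_symm T.symm

lemma awayι_projStruct {f : MvPolynomial (Fin m) k} {d : ℕ} (hd : 0 < d)
    (hf : f ∈ homogeneousSubmodule (Fin m) k d) :
    Proj.awayι _ f hf hd ≫ projStruct k m =
      Spec.map (CommRingCat.ofHom (algebraMap k (Away (homogeneousSubmodule (Fin m) k) f))) := by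
  rw [projStruct, Proj.awayι_toSpecZero_assoc, ← Spec.map_comp]
  rfl

lemma projIso_hom_projStruct (T : (Fin m → k) ≃ₗ[k] (Fin m → k)) :
    (projIso T).hom ≫ projStruct k m = projStruct k m := by
  set g := gradedLinearSubst T.toLinearMap
  have hg := irrelevant_le_map_gradedLinearSubst T
  refine (Proj.mapAffineOpenCover g hg).openCover.hom_ext _ _ ?_
  rintro ⟨i, p, hp⟩
  change Proj.awayι _ (g p) (g.2 hp) i.pos ≫ Proj.map g hg ≫ _ =
    Proj.awayι _ (g p) (g.2 hp) i.pos ≫ _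
  rw [reassoc_of% Proj.awayι_comp_map g hg i.pos p hp, awayι_projStruct, awayι_projStruct,
    ← Spec.map_comp, ← CommRingCat.ofHom_comp]
  congr 2
  ext1 c
  exact awayMap_algebraMap g p ((linearSubst k T.toLinearMap).commutes c)

lemma exists_algEquiv_of_iso_Spec {R S : Type u} [CommRing R] [CommRing S] [Algebra R S]
    (φ : Spec (.of S) ≅ Spec (.of S))
    (hφ : φ.hom ≫ Spec.map (CommRingCat.ofHom (algebraMap R S)) =
      Spec.map (CommRingCat.ofHom (algebraMap R S))) :
    ∃ e : S ≃ₐ[R] S, φ.hom = Spec.map (CommRingCat.ofHom (e : S →+* S)) := by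
  let f : CommRingCat.of S ≅ CommRingCat.of S := (Scheme.Spec.preimageIso φ).unop
  have hf : Spec.map f.hom = φ.hom := Spec.map_preimage φ.hom
  have hcomm : CommRingCat.ofHom (algebraMap R S) ≫ f.hom = CommRingCat.ofHom (algebraMap R S) :=
    Spec.map_injective (by rw [Spec.map_comp, hf, hφ])
  exact ⟨AlgEquiv.ofRingEquiv (f := f.commRingCatIsoToRingEquiv) fun r ↦
    congrArg (fun f ↦ f.hom r) hcomm, hf.symm⟩

end Schemes

section Comparison

attribute [local instance] MvPolynomial.algebraMvPolynomial

open HomogeneousLocalization TensorProduct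

variable {k : Type u} [Field k] [Fintype k] {m : ℕ}

lemma drinfeldOpens_eq_basicOpen :
    drinfeldOpens k m = Proj.basicOpen (homogeneousSubmodule (Fin m) k) (disc k k (Fin m)) := by
  have := Fintype.ofFinite {v : Fin m → k // v ≠ 0}
  ext x
  have := x.isPrime
  change (∀ c : Fin m → k, c ≠ 0 → _) ↔ disc k k (Fin m) ∉ x.asHomogeneousIdeal.toIdeal
  rw [disc, finprod_eq_prod_of_fintype, Ideal.IsPrime.prod_mem_iff]
  simp [linearForm_apply, MvPolynomial.smul_eq_C_mul]

variable (k m) in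
/-- The coordinate ring of the half-space: the fractions of degree zero whose denominator is a
power of the product of the rational linear forms. -/
abbrev HalfSpaceRing : Type u := Away (homogeneousSubmodule (Fin m) k) (disc k k (Fin m))

/-- The open immersion into projective space, under the identification of the half-space with the
spectrum of its coordinate ring. -/
noncomputable def specι [NeZero m] : Spec (.of (HalfSpaceRing k m)) ⟶ projSpace k m :=
  Proj.awayι _ _ disc_mem_homogeneousSubmodule discDegree_pos

lemma exists_iso_drinfeldScheme [NeZero m] :
    ∃ e : drinfeldScheme k m ≅ Spec (.of (HalfSpaceRing k m)), e.inv ≫ drinfeldι k m = specι := by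
  refine ⟨Scheme.isoOfEq _ drinfeldOpens_eq_basicOpen ≪≫
    Proj.basicOpenIsoSpec _ _ disc_mem_homogeneousSubmodule discDegree_pos, ?_⟩
  simp [Proj.awayι, drinfeldι, specι]

variable {K : Type u} [Field K] [Algebra k K]

lemma exists_iso_pullback_drinfeldStruct [NeZero m] :
    ∃ e : pullback (drinfeldStruct k m) (Spec.map (CommRingCat.ofHom (algebraMap k K))) ≅
        Spec (.of (K ⊗[k] HalfSpaceRing k m)),
      e.inv ≫ pullback.fst _ _ ≫ drinfeldι k m =
        Spec.map (CommRingCat.ofHom (Algebra.TensorProduct.includeRight :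
          HalfSpaceRing k m →ₐ[k] K ⊗[k] HalfSpaceRing k m).toRingHom) ≫ specι ∧
      e.inv ≫ pullback.snd _ _ = Spec.map (CommRingCat.ofHom (algebraMap K _)) := by
  obtain ⟨e, he⟩ := exists_iso_drinfeldScheme (k := k) (m := m)
  have hstruct : e.inv ≫ drinfeldStruct k m = Spec.map (CommRingCat.ofHom (algebraMap k _)) := by
    rw [drinfeldStruct, reassoc_of% he, specι, awayι_projStruct]
  have hpullback : IsPullback
      (Spec.map (CommRingCat.ofHom (Algebra.TensorProduct.includeRight :
        HalfSpaceRing k m →ₐ[k] K ⊗[k] HalfSpaceRing k m).toRingHom) ≫ e.inv)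
      (Spec.map (CommRingCat.ofHom (algebraMap K (K ⊗[k] HalfSpaceRing k m))))
      (drinfeldStruct k m) (Spec.map (CommRingCat.ofHom (algebraMap k K))) :=
    (isPullback_SpecMap_of_isPushout _ _ _ _
      (CommRingCat.isPushout_tensorProduct k K (HalfSpaceRing k m)).flip).of_iso
      (Iso.refl _) e.symm (Iso.refl _) (Iso.refl _) (by simp) (by simp) (by simp [hstruct])
      (by simp)
  refine ⟨hpullback.isoPullback.symm, ?_, hpullback.isoPullback_hom_snd⟩
  rw [Iso.symm_inv, hpullback.isoPullback_hom_fst_assoc, Category.assoc, he]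

lemma exists_map_comp_specι [NeZero m] (T : (Fin m → k) ≃ₗ[k] (Fin m → k)) :
    ∃ γ : HalfSpaceRing k m →+* HalfSpaceRing k m,
      (∀ n p hp, γ (Away.mk _ disc_mem_homogeneousSubmodule n p hp) =
        Away.mk _ disc_mem_homogeneousSubmodule n (linearSubst k T.toLinearMap p)
          (isHomogeneous_linearSubst _ hp)) ∧
      specι ≫ (projIso T).hom = Spec.map (CommRingCat.ofHom γ) ≫ specι :=
  exists_awayι_comp_map_eq _ (irrelevant_le_map_gradedLinearSubst T) discDegree_pos _ _
    (linearSubst_disc T)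

lemma exists_fst_comp_projIso_eq_of_neZero [NeZero m]
    (φ : pullback (drinfeldStruct k m) (Spec.map (CommRingCat.ofHom (algebraMap k K))) ≅
      pullback (drinfeldStruct k m) (Spec.map (CommRingCat.ofHom (algebraMap k K))))
    (hφ : φ.hom ≫ pullback.snd _ _ = pullback.snd _ _) :
    ∃ T : (Fin m → k) ≃ₗ[k] (Fin m → k),
      pullback.fst _ _ ≫ drinfeldι k m ≫ (projIso T).hom =
        φ.hom ≫ pullback.fst _ _ ≫ drinfeldι k m := by
  obtain ⟨e, hfst, hsnd⟩ := exists_iso_pullback_drinfeldStruct (k := k) (K := K) (m := m)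
  obtain ⟨Φ, hΦ⟩ := exists_algEquiv_of_iso_Spec (R := K) (e.symm ≪≫ φ ≪≫ e)
    (by simp [← hsnd, hφ])
  have hΦ' : e.inv ≫ φ.hom = Spec.map (CommRingCat.ofHom (Φ : _ →+* _)) ≫ e.inv := by
    simp [← hΦ]
  obtain ⟨T, hT⟩ := (isDrinfeldRing_awayLift (k := k) (ι := Fin m)
    (L := FractionRing (MvPolynomial (Fin m) K))).exists_linearEquiv_tmul Φ
  obtain ⟨γ, hγ, hγι⟩ := exists_map_comp_specι T
  refine ⟨T, ?_⟩
  rw [← cancel_epi e.inv, reassoc_of% hfst, reassoc_of% hΦ', hfst, hγι, ← Spec.map_comp_assoc,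
    ← Spec.map_comp_assoc]
  congr 2
  ext a
  obtain ⟨n, p, hp, rfl⟩ := Away.mk_surjective _ disc_mem_homogeneousSubmodule a
  exact (congrArg (fun b ↦ (1 : K) ⊗ₜ[k] b) (hγ n p hp)).trans
    (hT _ _ n p hp (awayLift_mk_mul_pow _ _ hp) (awayLift_mk_mul_pow _ _ _)).symm

theorem exists_fst_comp_projIso_eq
    (φ : pullback (drinfeldStruct k m) (Spec.map (CommRingCat.ofHom (algebraMap k K))) ≅
      pullback (drinfeldStruct k m) (Spec.map (CommRingCat.ofHom (algebraMap k K))))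
    (hφ : φ.hom ≫ pullback.snd _ _ = pullback.snd _ _) :
    ∃ T : (Fin m → k) ≃ₗ[k] (Fin m → k),
      pullback.fst _ _ ≫ drinfeldι k m ≫ (projIso T).hom =
        φ.hom ≫ pullback.fst _ _ ≫ drinfeldι k m := by
  obtain rfl | hm := eq_or_ne m 0
  · have := isEmpty_projSpace_zero (k := k)
    have := Function.isEmpty (pullback.fst (drinfeldStruct k 0)
      (Spec.map (CommRingCat.ofHom (algebraMap k K))) ≫ drinfeldι k 0)
    exact ⟨LinearEquiv.refl _ _, isInitialOfIsEmpty.hom_ext _ _⟩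
  · have : NeZero m := ⟨hm⟩
    exact exists_fst_comp_projIso_eq_of_neZero φ hφ

end Comparison

end Drinfeld

/-- For any field extension `K/k` of the finite field `k`, every
`K`-automorphism `φ` of the base change `Ω(V)_K = Ω(V) ×_{Spec k} Spec K`
comes by base change from a `k`-automorphism `ψ` of `P(V)`:
`(ψ ×_{Spec k} id_{Spec K}) ∘ ι_K = ι_K ∘ φ`, where `ι_K` is the base change
of the open immersion `ι : Ω(V) → P(V)`. -/
theorem stmt_1 (k : Type u) [Field k] [Fintype k]
    (V : Type*) [AddCommGroup V] [Module k V] [FiniteDimensional k V]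
    (K : Type u) [Field K] [Algebra k K]
    (φ : pullback (drinfeldStruct k (finrank k V))
          (Spec.map (CommRingCat.ofHom (algebraMap k K))) ≅
        pullback (drinfeldStruct k (finrank k V))
          (Spec.map (CommRingCat.ofHom (algebraMap k K))))
    (hφ : φ.hom ≫ pullback.snd (drinfeldStruct k (finrank k V))
            (Spec.map (CommRingCat.ofHom (algebraMap k K))) =
          pullback.snd (drinfeldStruct k (finrank k V))
            (Spec.map (CommRingCat.ofHom (algebraMap k K)))) :
    ∃ (ψ : projSpace k (finrank k V) ≅ projSpace k (finrank k V))
      (hψ : ψ.hom ≫ projStruct k (finrank k V) = projStruct k (finrank k V)),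
      pullback.map (drinfeldStruct k (finrank k V))
          (Spec.map (CommRingCat.ofHom (algebraMap k K)))
          (projStruct k (finrank k V))
          (Spec.map (CommRingCat.ofHom (algebraMap k K)))
          (drinfeldι k (finrank k V)) (𝟙 _) (𝟙 _)
          (by simp [drinfeldStruct]) (by simp) ≫
        pullback.map (projStruct k (finrank k V))
          (Spec.map (CommRingCat.ofHom (algebraMap k K)))
          (projStruct k (finrank k V))
          (Spec.map (CommRingCat.ofHom (algebraMap k K)))
          ψ.hom (𝟙 _) (𝟙 _) (by rw [Category.comp_id, hψ]) (by simp) =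
      φ.hom ≫
        pullback.map (drinfeldStruct k (finrank k V))
          (Spec.map (CommRingCat.ofHom (algebraMap k K)))
          (projStruct k (finrank k V))
          (Spec.map (CommRingCat.ofHom (algebraMap k K)))
          (drinfeldι k (finrank k V)) (𝟙 _) (𝟙 _)
          (by simp [drinfeldStruct]) (by simp) := by
  obtain ⟨T, hT⟩ := Drinfeld.exists_fst_comp_projIso_eq φ hφ
  refine ⟨Drinfeld.projIso T, Drinfeld.projIso_hom_projStruct T, pullback.hom_ext ?_ ?_⟩
  · simpa only [pullback.map, Category.assoc, pullback.lift_fst, pullback.lift_fst_assoc] using hT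
  · simpa only [pullback.map, Category.assoc, pullback.lift_snd, Category.comp_id] using hφ.symm
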